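/- arXiv:1511.06872 — 2 statements merged into one kernel-verified Lean document; each statement's English description precedes it below -/
import Mathlib

section
/- Let G_xy be a parented a-graph belonging to A* and let c be a solution state of G_xy, say with c(x) = 1 and c(y) = 2. Then there exists a path between x and y in G_xy all of whose vertices are colored 1 or 2; that is, there exists a 2-color path between x and y using the colors of x and y. -/
open SimpleGraph

/-- A proper vertex-coloring of `G` using at most 4 colors. -/
def IsProper4Coloring {V : Type} (G : SimpleGraph V) (c : V → Fin 4) : Prop :=
  ∀ a b : V, G.Adj a b → c a ≠ c b

/-- The degree of a vertex, as the number of its neighbours. -/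
noncomputable def vdeg {V : Type} (G : SimpleGraph V) (w : V) : ℕ :=
  (G.neighborSet w).ncard

/-- A (combinatorial) planar triangulation: a connected simple graph together with its
set of triangular faces, every edge lying on exactly two faces, satisfying Euler's
formula `v - e + f = 2`. -/
structure PlanarTriangulation (V : Type) [Fintype V] [DecidableEq V] where
  graph : SimpleGraph V
  connected : graph.Connected
  faces : Finset (Finset V)
  faces_card : ∀ f ∈ faces, f.card = 3
  faces_adj : ∀ f ∈ faces, ∀ a ∈ f, ∀ b ∈ f, a ≠ b → graph.Adj a b
  edge_faces : ∀ a b : V, graph.Adj a b →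
    (faces.filter fun f => a ∈ f ∧ b ∈ f).card = 2
  euler : (Fintype.card V : ℤ) - (graph.edgeSet.ncard : ℤ) + (faces.card : ℤ) = 2

/-- An a-graph: a near-triangulation of the plane whose unique non-triangular face is a
4-face with boundary cycle `u x v y`, the pairs `(x,y)` and `(u,v)` being the two pairs
of opposite (non-adjacent) boundary vertices.  All other faces are triangles, every
edge lies on exactly two faces (boundary edges lie on one triangle and the 4-face), and
Euler's formula holds. -/
structure AGraph (V : Type) [Fintype V] [DecidableEq V] where
  graph : SimpleGraph V
  connected : graph.Connected
  u : V
  x : V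
  v : V
  y : V
  adj_ux : graph.Adj u x
  adj_xv : graph.Adj x v
  adj_vy : graph.Adj v y
  adj_yu : graph.Adj y u
  not_adj_xy : ¬ graph.Adj x y
  not_adj_uv : ¬ graph.Adj u v
  x_ne_y : x ≠ y
  u_ne_v : u ≠ v
  faces : Finset (Finset V)
  faces_card : ∀ f ∈ faces, f.card = 3
  faces_adj : ∀ f ∈ faces, ∀ a ∈ f, ∀ b ∈ f, a ≠ b → graph.Adj a b
  edge_faces : ∀ a b : V, graph.Adj a b →
    (faces.filter fun f => a ∈ f ∧ b ∈ f).card =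
      (if ({a, b} : Finset V) ∈ ({{u, x}, {x, v}, {v, y}, {y, u}} : Finset (Finset V))
        then 1 else 2)
  euler : (Fintype.card V : ℤ) - (graph.edgeSet.ncard : ℤ) + ((faces.card : ℤ) + 1) = 2

/-- A parented a-graph `G_xy` is an a-graph counterexample if in every proper
4-coloring the designated opposite boundary vertices `x` and `y` get the same color. -/
def IsACounterexample {V : Type} [Fintype V] [DecidableEq V] (G : AGraph V) : Prop :=
  ∀ c : V → Fin 4, IsProper4Coloring G.graph c → c G.x = c G.y

/-- A minimal a-graph counterexample: an a-graph counterexample such that no a-graph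
counterexample has fewer vertices. -/
def IsMinimalACounterexample {V : Type} [Fintype V] [DecidableEq V] (G : AGraph V) : Prop :=
  IsACounterexample G ∧
    ∀ (W : Type) [Fintype W] [DecidableEq W] (H : AGraph W),
      IsACounterexample H → Fintype.card V ≤ Fintype.card W

/-- A minimal counterexample to the 4-color conjecture: a planar triangulation with no
proper 4-coloring such that every planar triangulation of lower order has one. -/
def IsMinimal4CTCounterexample {V : Type} [Fintype V] [DecidableEq V]
    (T : PlanarTriangulation V) : Prop :=
  (¬ ∃ c : V → Fin 4, IsProper4Coloring T.graph c) ∧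
    ∀ (W : Type) [Fintype W] [DecidableEq W] (S : PlanarTriangulation W),
      Fintype.card W < Fintype.card V → ∃ c : W → Fin 4, IsProper4Coloring S.graph c

/-- `b` can be reached from `a` by a walk of `G` all of whose vertices lie in `S`. -/
def ReachableWithin {V : Type} (G : SimpleGraph V) (S : Set V) (a b : V) : Prop :=
  ∃ p : G.Walk a b, ∀ w ∈ p.support, w ∈ S

/-- Removing the vertex set `S` from `G` leaves a disconnected graph. -/
def RemovalDisconnects {V : Type} (G : SimpleGraph V) (S : Set V) : Prop :=
  ∃ a b : V, a ∉ S ∧ b ∉ S ∧ ¬ ReachableWithin G Sᶜ a b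

/-- `G` has a separating cycle of length `n`. -/
def HasSeparatingCycle {V : Type} (G : SimpleGraph V) (n : ℕ) : Prop :=
  ∃ (a : V) (p : G.Walk a a), p.IsCycle ∧ p.length = n ∧
    RemovalDisconnects G {w | w ∈ p.support}

/-- A planar triangulation is internally 6-connected if it has minimum degree 5, no
separating 3-cycles or 4-cycles, and whenever a separating 5-cycle is removed, at least
one of the resulting components consists of a single vertex. -/
def Internally6Connected {V : Type} [Fintype V] [DecidableEq V]
    (T : PlanarTriangulation V) : Prop :=
  (∀ w : V, 5 ≤ vdeg T.graph w) ∧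
  ¬ HasSeparatingCycle T.graph 3 ∧
  ¬ HasSeparatingCycle T.graph 4 ∧
  ∀ (a : V) (p : T.graph.Walk a a), p.IsCycle → p.length = 5 →
    RemovalDisconnects T.graph {w | w ∈ p.support} →
    ∃ z : V, z ∉ p.support ∧
      ∀ b : V, b ∉ p.support → ReachableWithin T.graph {w | w ∉ p.support} z b → b = z

/-- The graph of the parent triangulation `G + xy` of an a-graph `G`. -/
def parentXYGraph {V : Type} [Fintype V] [DecidableEq V] (G : AGraph V) : SimpleGraph V :=
  G.graph ⊔ SimpleGraph.fromEdgeSet {s(G.x, G.y)}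

/-- The graph of the parent triangulation `G + uv` of an a-graph `G`. -/
def parentUVGraph {V : Type} [Fintype V] [DecidableEq V] (G : AGraph V) : SimpleGraph V :=
  G.graph ⊔ SimpleGraph.fromEdgeSet {s(G.u, G.v)}

/-- An a-graph is internally 6a-connected if at least one of its two parent
triangulations is internally 6-connected. -/
def Internally6aConnected {V : Type} [Fintype V] [DecidableEq V] (G : AGraph V) : Prop :=
  ∃ T : PlanarTriangulation V,
    (T.graph = parentXYGraph G ∨ T.graph = parentUVGraph G) ∧ Internally6Connected T

/-- A single Kempe exchange: for some pair of distinct colors `j`, `k`, the colors `j`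
and `k` are swapped on a non-empty proper subset of the `j`-`k` Kempe chains (a
non-empty union `U` of connected components of the subgraph induced by the vertices
colored `j` or `k`, with `U` not all of them), all other vertices keeping their color. -/
def KempeStep {V : Type} (G : SimpleGraph V) (c c' : V → Fin 4) : Prop :=
  ∃ j k : Fin 4, j ≠ k ∧ ∃ U : Set V,
    U.Nonempty ∧
    U ⊆ {w | c w = j ∨ c w = k} ∧
    U ≠ {w | c w = j ∨ c w = k} ∧
    (∀ a ∈ U, ∀ b : V, ReachableWithin G {w | c w = j ∨ c w = k} a b → b ∈ U) ∧
    (∀ w ∈ U, c' w = if c w = j then k else j) ∧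
    (∀ w : V, w ∉ U → c' w = c w)

/-- The equivalence relation on colorings generated by Kempe exchanges. -/
def KempeEquiv {V : Type} (G : SimpleGraph V) : (V → Fin 4) → (V → Fin 4) → Prop :=
  Relation.EqvGen (KempeStep G)

/-- For designated vertices `x`, `y`: no Kempe equivalence class of proper 4-colorings
contains both a non-solution state (`c x = c y`) and a solution state (`c x ≠ c y`).
This is the defining property of the family `A*`. -/
def NoNSClass {V : Type} (G : SimpleGraph V) (x y : V) : Prop :=
  ∀ c c' : V → Fin 4, IsProper4Coloring G c → IsProper4Coloring G c' →
    KempeEquiv G c c' → (c x = c y ↔ c' x = c' y)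

/-- The coloring state determined by a coloring: the induced partition of the vertex
set into color classes, recorded as the relation of having equal colors.  Two colorings
represent the same state precisely when they have the same `statePart`. -/
def statePart {V : Type} (c : V → Fin 4) : V → V → Prop :=
  fun a b => c a = c b

/-- The four boundary vertices of an a-graph. -/
def boundaryFinset {V : Type} [Fintype V] [DecidableEq V] (G : AGraph V) : Finset V :=
  {G.u, G.x, G.v, G.y}

/-- The interior vertices of an a-graph: those not on the boundary 4-cycle. -/
def interiorFinset {V : Type} [Fintype V] [DecidableEq V] (G : AGraph V) : Finset V :=
  Finset.univ \ boundaryFinset G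

open Classical in
/-- The inner ring of an a-graph: the interior vertices adjacent to some boundary
vertex. -/
noncomputable def innerRingFinset {V : Type} [Fintype V] [DecidableEq V]
    (G : AGraph V) : Finset V :=
  (interiorFinset G).filter fun w => ∃ b ∈ boundaryFinset G, G.graph.Adj w b

/-- `G` belongs to the family `G(m,n)`: its inner ring has order `n` and encloses `m`
further interior vertices. -/
def InFamilyG {V : Type} [Fintype V] [DecidableEq V] (G : AGraph V) (m n : ℕ) : Prop :=
  (innerRingFinset G).card = n ∧ (interiorFinset G \ innerRingFinset G).card = m

/-- The icosahedron, the unique 5-regular planar triangulation, on 12 vertices. -/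
def icosG : SimpleGraph (Fin 12) :=
  SimpleGraph.fromEdgeSet
    {s(0, 1), s(0, 2), s(0, 3), s(0, 4), s(0, 5),
     s(1, 2), s(2, 3), s(3, 4), s(4, 5), s(5, 1),
     s(11, 6), s(11, 7), s(11, 8), s(11, 9), s(11, 10),
     s(6, 7), s(7, 8), s(8, 9), s(9, 10), s(10, 6),
     s(1, 6), s(1, 10), s(2, 6), s(2, 7), s(3, 7),
     s(3, 8), s(4, 8), s(4, 9), s(5, 9), s(5, 10)}

/-- The order-12 a-graph `G*`: the icosahedron with the edge `uv = {0,1}` deleted.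
Its boundary 4-cycle is `u x v y = 0 2 1 5`, so `(x, y) = (2, 5)` and
`(u, v) = (0, 1)` are the two pairs of opposite boundary vertices. -/
def gstarG : SimpleGraph (Fin 12) := icosG.deleteEdges {s(0, 1)}

/-- The boundary vertex `u` of `G*`. -/
def gstarU : Fin 12 := 0
/-- The boundary vertex `v` of `G*`. -/
def gstarV : Fin 12 := 1
/-- The boundary vertex `x` of `G*`. -/
def gstarX : Fin 12 := 2
/-- The boundary vertex `y` of `G*`. -/
def gstarY : Fin 12 := 5

/-!
If no walk in the colors of `x` and `y` joins these two vertices, then they lie in different Kempe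
chains for this pair of colors. Exchanging the two colors on the chain of `x` alone gives `x` the
color of `y`, so a solution state is Kempe equivalent to a non-solution state.
-/

namespace ReachableWithin

variable {V : Type} {G : SimpleGraph V} {S : Set V} {a b d : V}

theorem refl (ha : a ∈ S) : ReachableWithin G S a a :=
  ⟨Walk.nil, by simpa only [Walk.support_nil, List.mem_singleton, forall_eq] using ha⟩

theorem of_adj (hab : G.Adj a b) (ha : a ∈ S) (hb : b ∈ S) : ReachableWithin G S a b :=
  ⟨hab.toWalk, by simp [ha, hb]⟩

theorem trans (hab : ReachableWithin G S a b) (hbd : ReachableWithin G S b d) :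
    ReachableWithin G S a d := by
  obtain ⟨p, hp⟩ := hab
  obtain ⟨q, hq⟩ := hbd
  exact ⟨p.append q, fun w hw => ((Walk.mem_support_append_iff p q).1 hw).elim (hp w) (hq w)⟩

theorem mem_right (hab : ReachableWithin G S a b) : b ∈ S :=
  hab.elim fun p hp => hp b p.end_mem_support

end ReachableWithin

section KempeChains

variable {V : Type} {α : Type*} {G : SimpleGraph V} {c : V → α} {j k : α} {U : Set V} {a b : V}

/-- The vertices colored `j` or `k`, on which the `j`-`k` Kempe chains live. -/
def twoColorSet (c : V → α) (j k : α) : Set V :=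
  {w | c w = j ∨ c w = k}

/-- The `j`-`k` Kempe chain through `a`, as a vertex set. It is empty when `a` has neither of the
two colors. -/
def kempeChain (G : SimpleGraph V) (c : V → α) (j k : α) (a : V) : Set V :=
  {b | ReachableWithin G (twoColorSet c j k) a b}

/-- `U` contains every `j`-`k` Kempe chain that it meets. Vertices of `U` in other colors are
unrestricted. -/
def IsKempeClosed (G : SimpleGraph V) (c : V → α) (j k : α) (U : Set V) : Prop :=
  ∀ a ∈ U, ∀ b, ReachableWithin G (twoColorSet c j k) a b → b ∈ U

open Classical in
/-- The coloring obtained from `c` by exchanging the colors `j` and `k` on `U`. It models a Kempe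
exchange when `U` is a union of `j`-`k` Kempe chains. -/
noncomputable def kempeSwap [DecidableEq α] (c : V → α) (j k : α) (U : Set V) : V → α :=
  U.piecewise (Equiv.swap j k ∘ c) c

theorem self_mem_kempeChain (ha : a ∈ twoColorSet c j k) : a ∈ kempeChain G c j k a :=
  ReachableWithin.refl ha

theorem kempeChain_subset_twoColorSet : kempeChain G c j k a ⊆ twoColorSet c j k :=
  fun _ hb => hb.mem_right

theorem isKempeClosed_kempeChain : IsKempeClosed G c j k (kempeChain G c j k a) :=
  fun _ hb _ hbd => hb.trans hbd

variable [DecidableEq α]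

theorem kempeSwap_of_mem (ha : a ∈ U) : kempeSwap c j k U a = Equiv.swap j k (c a) := by
  classical exact Set.piecewise_eq_of_mem _ _ _ ha

theorem kempeSwap_of_notMem (ha : a ∉ U) : kempeSwap c j k U a = c a := by
  classical exact Set.piecewise_eq_of_notMem _ _ _ ha

theorem swap_apply_ne_of_ne {p q : α} (hpq : p ≠ q)
    (h : ¬((p = j ∨ p = k) ∧ (q = j ∨ q = k))) : Equiv.swap j k p ≠ q := by
  grind

theorem IsKempeClosed.kempeSwap_ne_of_mem_of_notMem (hU : IsKempeClosed G c j k U)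
    (hab : G.Adj a b) (hne : c a ≠ c b) (ha : a ∈ U) (hb : b ∉ U) :
    kempeSwap c j k U a ≠ kempeSwap c j k U b := by
  rw [kempeSwap_of_mem ha, kempeSwap_of_notMem hb]
  refine swap_apply_ne_of_ne hne fun ⟨hca, hcb⟩ => hb ?_
  exact hU a ha b (ReachableWithin.of_adj hab hca hcb)

theorem IsKempeClosed.kempeSwap_ne_of_adj (hU : IsKempeClosed G c j k U) (hab : G.Adj a b)
    (hne : c a ≠ c b) : kempeSwap c j k U a ≠ kempeSwap c j k U b := by
  by_cases ha : a ∈ U <;> by_cases hb : b ∈ U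
  · rw [kempeSwap_of_mem ha, kempeSwap_of_mem hb]
    exact (Equiv.injective _).ne hne
  · exact hU.kempeSwap_ne_of_mem_of_notMem hab hne ha hb
  · exact (hU.kempeSwap_ne_of_mem_of_notMem hab.symm hne.symm hb ha).symm
  · rwa [kempeSwap_of_notMem ha, kempeSwap_of_notMem hb]

end KempeChains

section KempeStep

variable {V : Type} {G : SimpleGraph V} {c : V → Fin 4} {x y : V}

theorem IsProper4Coloring.kempeSwap {j k : Fin 4} {U : Set V} (hc : IsProper4Coloring G c)
    (hU : IsKempeClosed G c j k U) : IsProper4Coloring G (kempeSwap c j k U) :=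
  fun a b hab => hU.kempeSwap_ne_of_adj hab (hc a b hab)

theorem IsKempeClosed.kempeStep_kempeSwap {j k : Fin 4} {U : Set V} (hU : IsKempeClosed G c j k U)
    (hjk : j ≠ k) (hne : U.Nonempty) (hss : U ⊂ twoColorSet c j k) :
    KempeStep G c (kempeSwap c j k U) := by
  refine ⟨j, k, hjk, U, hne, hss.subset, hss.ne, hU, fun w hw => ?_,
    fun w hw => kempeSwap_of_notMem hw⟩
  have hcw : c w = j ∨ c w = k := hss.subset hw
  rw [kempeSwap_of_mem hw]
  grind

theorem exists_kempeStep_eq_of_notMem_kempeChain (hc : IsProper4Coloring G c) (hxy : c x ≠ c y)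
    (hy : y ∉ kempeChain G c (c x) (c y) x) :
    ∃ c', KempeStep G c c' ∧ IsProper4Coloring G c' ∧ c' x = c' y := by
  set U := kempeChain G c (c x) (c y) x
  have hU : IsKempeClosed G c (c x) (c y) U := isKempeClosed_kempeChain
  have hx : x ∈ U := self_mem_kempeChain (Or.inl rfl)
  have hss : U ⊂ twoColorSet c (c x) (c y) :=
    (Set.ssubset_iff_of_subset kempeChain_subset_twoColorSet).2 ⟨y, Or.inr rfl, hy⟩
  refine ⟨kempeSwap c (c x) (c y) U, hU.kempeStep_kempeSwap hxy ⟨x, hx⟩ hss,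
    hc.kempeSwap hU, ?_⟩
  rw [kempeSwap_of_mem hx, kempeSwap_of_notMem hy, Equiv.swap_apply_left]

theorem stmt_5_general (hA : NoNSClass G x y) (hc : IsProper4Coloring G c) (hs : c x ≠ c y) :
    ∃ p : G.Walk x y, ∀ w ∈ p.support, c w = c x ∨ c w = c y := by
  by_contra hy
  obtain ⟨c', hstep, hc', heq⟩ := exists_kempeStep_eq_of_notMem_kempeChain hc hs hy
  exact hs ((hA c c' hc hc' (.rel _ _ hstep)).2 heq)

end KempeStep

/-- For `G_xy ∈ A*` and a solution state `c` (with `c x ≠ c y`), there is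
a path between `x` and `y` all of whose vertices are colored with the colors of `x`
and `y`. -/
theorem stmt_5 {V : Type} [Fintype V] [DecidableEq V] (G : AGraph V)
    (hA : NoNSClass G.graph G.x G.y) (c : V → Fin 4)
    (hc : IsProper4Coloring G.graph c) (hs : c G.x ≠ c G.y) :
    ∃ p : G.graph.Walk G.x G.y, ∀ w ∈ p.support, c w = c G.x ∨ c w = c G.y :=
  stmt_5_general hA hc hs
end

section
/- If G is an a-graph belonging to G(2,n) (its inner ring encloses exactly two interior vertices) and G is internally 6a-connected, then G is isomorphic to G*, the order-12 a-graph obtained from the icosahedron by deleting one edge; in particular n = 6 and every interior vertex of G has degree 5. -/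
open SimpleGraph

/-!
By Euler's formula, the sum of the degree and the number of ring neighbours over the interior
vertices is `6` times their number plus `2`, while each of the four edges of the outer ring spans a
face with exactly one interior vertex. An interior vertex adjacent to the ring has more ring
neighbours than such faces, unless all four faces meet at it and its degree is at least `7`. With
exactly two enclosed vertices `p` and `q` the resulting inequality is an equality at every vertex:
all interior degrees are `5`, and an interior vertex with two ring neighbours spans a face with an
edge of the ring.

Walking around the links of interior vertices then reconstructs the graph. If `p` and `q` were not
adjacent, the interior vertices within distance two of `p` would be closed under interior adjacency
and miss `q`, so the outer ring would be a separating 4-cycle of both parents. Hence `p`, `q` and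
their two common neighbours form a Birkhoff diamond; four further vertices surround it, and the
degrees of the ring vertices leave room for nothing else inside the ring.
-/

/-! ### Connectivity and degrees of graphs -/

section Graph

variable {V : Type} {H K : SimpleGraph V} {S : Set V}

lemma ReachableWithin.mem_of_forall_adj {P : Set V} {a b : V} (h : ReachableWithin H S a b)
    (ha : a ∈ P) (hP : ∀ c ∈ P, c ∈ S → ∀ d ∈ S, H.Adj c d → d ∈ P) : b ∈ P := by
  obtain ⟨walk, hwalk⟩ := h
  induction walk with
  | nil => exact ha
  | cons hadj tail ih =>
    simp only [Walk.support_cons, List.mem_cons, forall_eq_or_imp] at hwalk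
    exact ih (hP _ ha hwalk.1 _ (hwalk.2 _ tail.start_mem_support) hadj) hwalk.2

lemma ReachableWithin.of_forall_adj {a b : V} (h : ReachableWithin K S a b) (ha : a ∈ S)
    (hKH : ∀ c ∈ S, ∀ d ∈ S, K.Adj c d → H.Adj c d) : ReachableWithin H S a b := by
  refine h.mem_of_forall_adj (P := {c | ReachableWithin H S a c}) ⟨.nil, by simpa using ha⟩ ?_
  rintro c ⟨walk, hwalk⟩ hc d hd hcd
  refine ⟨walk.concat (hKH c hc d hd hcd), fun w hw => ?_⟩
  rw [Walk.support_concat, List.mem_append, List.mem_singleton] at hw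
  rcases hw with hw | rfl
  exacts [hwalk w hw, hd]

lemma mem_of_not_removalDisconnects {P : Set V} {a : V} (hS : ¬ RemovalDisconnects H S)
    (ha : a ∉ S) (haP : a ∈ P) (hP : ∀ c ∈ P, c ∉ S → ∀ d ∉ S, H.Adj c d → d ∈ P) :
    ∀ b ∉ S, b ∈ P := by
  intro b hb
  simp only [RemovalDisconnects, not_exists, not_and, not_not] at hS
  exact (hS a b ha hb).mem_of_forall_adj haP hP

lemma vdeg_eq_degree [Fintype V] [DecidableRel H.Adj] (w : V) : vdeg H w = H.degree w := by
  rw [vdeg, Set.ncard_eq_toFinset_card', ← card_neighborSet_eq_degree, Set.toFinset_card]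

lemma card_le_vdeg [Finite V] {w : V} {s : Finset V} (hs : ∀ z ∈ s, H.Adj w z) :
    s.card ≤ vdeg H w := by
  rw [← Set.ncard_coe_finset]
  exact Set.ncard_le_ncard hs

lemma vdeg_le_card {w : V} {s : Finset V} (hs : ∀ z, H.Adj w z → z ∈ s) :
    vdeg H w ≤ s.card := by
  rw [← Set.ncard_coe_finset]
  exact Set.ncard_le_ncard hs

lemma vdeg_sup_edge_le [Finite V] (s t w : V) :
    vdeg (H ⊔ fromEdgeSet {s(s, t)}) w ≤ vdeg H w + 1 := by
  classical
  refine (Set.ncard_le_ncard fun z hz => ?_).trans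
    (Set.ncard_insert_le (if w = s then t else s) (H.neighborSet w))
  simp only [mem_neighborSet, sup_adj, fromEdgeSet_adj, Set.mem_singleton_iff, Sym2.eq_iff] at hz
  simp only [Set.mem_insert_iff, mem_neighborSet]
  grind

lemma vdeg_sup_edge_of_ne {s t w : V} (hs : w ≠ s) (ht : w ≠ t) :
    vdeg (H ⊔ fromEdgeSet {s(s, t)}) w = vdeg H w := by
  simp [vdeg, neighborSet, hs, ht]

lemma exists_adj_iff_of_vdeg_eq_two {a b : V} (h : vdeg H a = 2) (hab : H.Adj a b) :
    ∃ c, c ≠ b ∧ ∀ z, H.Adj a z ↔ z = b ∨ z = c := by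
  obtain ⟨y, z, hyz, hset⟩ := Set.ncard_eq_two.1 h
  have hadj : ∀ t, H.Adj a t ↔ t = y ∨ t = z := fun t => by
    rw [← mem_neighborSet, hset, Set.mem_insert_iff, Set.mem_singleton_iff]
  rcases (hadj b).1 hab with rfl | rfl
  · exact ⟨z, hyz.symm, hadj⟩
  · exact ⟨y, hyz, fun t => (hadj t).trans or_comm⟩

lemma adj_iff_of_vdeg_eq_two {a b c : V} (h : vdeg H a = 2) (hab : H.Adj a b)
    (hac : H.Adj a c) (hbc : b ≠ c) (z : V) : H.Adj a z ↔ z = b ∨ z = c := by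
  obtain ⟨d, -, hd⟩ := exists_adj_iff_of_vdeg_eq_two h hab
  obtain rfl : c = d := ((hd c).1 hac).resolve_left hbc.symm
  exact hd z

section TwoRegular

variable {N : Finset V} {a b c : V}

lemma not_adj_of_vdeg_eq_two (hN : N.card = 5) (hmem : ∀ a b, H.Adj a b → a ∈ N)
    (htwo : ∀ a ∈ N, vdeg H a = 2) (hab : H.Adj a b) (hbc : H.Adj b c) : ¬ H.Adj c a := by
  classical
  intro hca
  have hsub : {a, b, c} ⊆ N := by
    simp only [Finset.insert_subset_iff, Finset.singleton_subset_iff]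
    exact ⟨hmem _ _ hab, hmem _ _ hbc, hmem _ _ hca⟩
  have hcard : (N \ {a, b, c}).card = 2 := by
    rw [Finset.card_sdiff_of_subset hsub, hN,
      Finset.card_eq_three.2 ⟨a, b, c, hab.ne, hca.ne', hbc.ne, rfl⟩]
  have hclosed : ∀ y ∈ ({a, b, c} : Finset V), ∀ z, H.Adj y z → z ∈ ({a, b, c} : Finset V) := by
    simp only [Finset.mem_insert, Finset.mem_singleton, forall_eq_or_imp, forall_eq]
    have ha := adj_iff_of_vdeg_eq_two (htwo a (hmem _ _ hab)) hab hca.symm hbc.ne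
    have hb := adj_iff_of_vdeg_eq_two (htwo b (hmem _ _ hbc)) hab.symm hbc hca.ne'
    have hc := adj_iff_of_vdeg_eq_two (htwo c (hmem _ _ hca)) hca hbc.symm hab.ne
    exact ⟨fun z hz => .inr ((ha z).1 hz), fun z hz => ((hb z).1 hz).imp_right .inr,
      fun z hz => ((hc z).1 hz).imp_right .inl⟩
  obtain ⟨d, hd⟩ : (N \ {a, b, c}).Nonempty := Finset.card_pos.1 (by omega)
  have hd_nbrs : ∀ z, H.Adj d z → z ∈ (N \ {a, b, c}).erase d := fun z hdz =>
    Finset.mem_erase.2 ⟨hdz.ne', Finset.mem_sdiff.2 ⟨hmem _ _ hdz.symm, fun hz =>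
      (Finset.mem_sdiff.1 hd).2 (hclosed z hz d hdz.symm)⟩⟩
  have hle := vdeg_le_card hd_nbrs
  rw [Finset.card_erase_of_mem hd, hcard, htwo d (Finset.mem_sdiff.1 hd).1] at hle
  omega

-- A `2`-regular graph on five vertices is a pentagon, as it has no room for two cycles.
lemma exists_pentagon_of_vdeg_eq_two [DecidableEq V] (hN : N.card = 5)
    (hmem : ∀ a b, H.Adj a b → a ∈ N) (htwo : ∀ a ∈ N, vdeg H a = 2)
    (hab : H.Adj a b) (hbc : H.Adj b c) (hac : a ≠ c) :
    ∃ d e, H.Adj c d ∧ H.Adj d e ∧ H.Adj e a ∧ [a, b, c, d, e].Nodup ∧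
      N = {a, b, c, d, e} := by
  obtain ⟨d, hdb, hc⟩ := exists_adj_iff_of_vdeg_eq_two (htwo c (hmem _ _ hbc.symm)) hbc.symm
  have hcd : H.Adj c d := (hc d).2 (.inr rfl)
  have hda : d ≠ a := by
    rintro rfl
    exact not_adj_of_vdeg_eq_two hN hmem htwo hab hbc hcd
  have hcard : ({d, c, b, a} : Finset V).card = 4 := by
    simp [hab.ne', hac.symm, hbc.ne', hcd.ne', hdb, hda]
  have hsub : {d, c, b, a} ⊆ N := by
    simp only [Finset.insert_subset_iff, Finset.singleton_subset_iff]
    exact ⟨hmem _ _ hcd.symm, hmem _ _ hcd, hmem _ _ hbc, hmem _ _ hab⟩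
  obtain ⟨e, he, hNe⟩ := (Finset.exists_eq_insert_iff (s := {d, c, b, a})).2
    ⟨hsub, by rw [hcard, hN]⟩
  simp only [Finset.mem_insert, Finset.mem_singleton, not_or] at he
  have he_nbrs : ∀ z, H.Adj e z → z ∈ ({d, a} : Finset V) := by
    intro z hez
    have hz : z ∈ N := hmem _ _ hez.symm
    have hzb : z ≠ b := by
      rintro rfl
      have := (adj_iff_of_vdeg_eq_two (htwo _ hz) hab.symm hbc hac e).1 hez.symm
      grind
    have hzc : z ≠ c := by
      rintro rfl
      have := (hc e).1 hez.symm
      grind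
    simpa [← hNe, hez.ne', hzb, hzc] using hz
  have heN : e ∈ N := hNe ▸ Finset.mem_insert_self _ _
  have he_eq : H.neighborSet e = {d, a} := by
    refine Set.eq_of_subset_of_ncard_le (fun z hz => by simpa using he_nbrs z hz) ?_
    rw [Set.ncard_pair hda]
    exact (htwo e heN).ge
  have hed : H.Adj e d := by simp [← mem_neighborSet, he_eq]
  have hea : H.Adj e a := by simp [← mem_neighborSet, he_eq]
  refine ⟨d, e, hcd, hed.symm, hea, ?_, by grind⟩
  simp [hab.ne, hac, hbc.ne, hcd.ne, hda.symm, hdb.symm, hea.ne', hed.ne', Ne.symm he.2.1,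
    Ne.symm he.2.2.1]

end TwoRegular

end Graph

/-! ### Faces, links and the outer ring -/

namespace AGraph

variable {V : Type} [Fintype V] [DecidableEq V] (G : AGraph V) {a b c d w : V}

/-- `a`, `b`, `c` are the three corners of a triangular face. -/
def IsFace (a b c : V) : Prop := {a, b, c} ∈ G.faces

variable {G}

namespace IsFace

lemma swap_left (h : G.IsFace a b c) : G.IsFace b a c := by
  rwa [IsFace, Finset.insert_comm]

lemma swap_right (h : G.IsFace a b c) : G.IsFace a c b := by
  rwa [IsFace, Finset.pair_comm]

lemma rotate (h : G.IsFace a b c) : G.IsFace b c a := h.swap_left.swap_right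

lemma rotate_symm (h : G.IsFace a b c) : G.IsFace c a b := h.swap_right.swap_left

lemma reverse (h : G.IsFace a b c) : G.IsFace c b a := h.rotate.swap_left

lemma nodup (h : G.IsFace a b c) : a ≠ b ∧ a ≠ c ∧ b ≠ c :=
  Finset.card_triple_eq_three_iff.1 (G.faces_card _ h)

lemma adj (h : G.IsFace a b c) : G.graph.Adj a b :=
  G.faces_adj _ h _ (by simp) _ (by simp) h.nodup.1

lemma adj_right (h : G.IsFace a b c) : G.graph.Adj b c := h.rotate.adj

end IsFace

variable (G)

/-- The link of `w`: two vertices are joined when they span a face together with `w`. -/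
def link (w : V) : SimpleGraph V where
  Adj := G.IsFace w
  symm.symm _ _ h := h.swap_right
  loopless.irrefl _ h := h.nodup.2.2 rfl

/-- The outer ring `u x v y`, indexed cyclically by `Fin 4`. -/
def outerRing : Fin 4 → V := ![G.u, G.x, G.v, G.y]

variable {G}

lemma mem_interiorFinset : w ∈ interiorFinset G ↔ w ∉ boundaryFinset G := by
  simp [interiorFinset]

lemma outerRing_injective : Function.Injective G.outerRing := by
  have := G.adj_ux.ne
  have := G.adj_xv.ne
  have := G.adj_vy.ne
  have := G.adj_yu.ne
  have := G.x_ne_y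
  have := G.u_ne_v
  intro i j hij
  fin_cases i <;> fin_cases j <;> simp_all [outerRing]

lemma image_outerRing : Finset.univ.image G.outerRing = boundaryFinset G := by
  ext w
  simp [boundaryFinset, outerRing, Fin.exists_fin_succ, eq_comm]

lemma outerRing_mem (i : Fin 4) : G.outerRing i ∈ boundaryFinset G :=
  image_outerRing (G := G) ▸ Finset.mem_image_of_mem _ (Finset.mem_univ i)

lemma exists_outerRing_eq (hb : b ∈ boundaryFinset G) : ∃ i, G.outerRing i = b := by
  simpa [← image_outerRing] using hb

lemma outerRing_adj_iff (i j : Fin 4) :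
    G.graph.Adj (G.outerRing i) (G.outerRing j) ↔ j = i + 1 ∨ i = j + 1 := by
  have := G.adj_ux
  have := G.adj_xv
  have := G.adj_vy
  have := G.adj_yu
  have := G.not_adj_xy
  have := G.not_adj_uv
  fin_cases i <;> fin_cases j <;> simp_all [outerRing, adj_comm]

lemma outerRing_adj_succ (i : Fin 4) : G.graph.Adj (G.outerRing i) (G.outerRing (i + 1)) :=
  (outerRing_adj_iff i _).2 (.inl rfl)

lemma card_boundaryFinset : (boundaryFinset G).card = 4 := by
  rw [← image_outerRing, Finset.card_image_of_injective _ outerRing_injective, Finset.card_fin]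

lemma notMem_boundaryFinset_of_adj (ha : a ∈ boundaryFinset G) (hb : b ∈ boundaryFinset G)
    (hab : G.graph.Adj a b) (hac : G.graph.Adj a c) (hbc : G.graph.Adj b c) :
    c ∉ boundaryFinset G := by
  intro hc
  obtain ⟨i, rfl⟩ := exists_outerRing_eq ha
  obtain ⟨j, rfl⟩ := exists_outerRing_eq hb
  obtain ⟨k, rfl⟩ := exists_outerRing_eq hc
  rw [outerRing_adj_iff] at hab hac hbc
  grind

lemma IsFace.notMem_boundaryFinset (h : G.IsFace a b c) (ha : a ∈ boundaryFinset G)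
    (hb : b ∈ boundaryFinset G) : c ∉ boundaryFinset G :=
  notMem_boundaryFinset_of_adj ha hb h.adj h.rotate_symm.adj.symm h.adj_right

lemma pair_mem_boundary_edges_iff (hab : G.graph.Adj a b) :
    ({a, b} : Finset V) ∈
        ({{G.u, G.x}, {G.x, G.v}, {G.v, G.y}, {G.y, G.u}} : Finset (Finset V)) ↔
      a ∈ boundaryFinset G ∧ b ∈ boundaryFinset G := by
  have hedges : ({{G.u, G.x}, {G.x, G.v}, {G.v, G.y}, {G.y, G.u}} : Finset (Finset V)) =
      Finset.univ.image fun i : Fin 4 => {G.outerRing i, G.outerRing (i + 1)} := by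
    ext e
    simp [outerRing, Fin.exists_fin_succ, eq_comm]
  rw [hedges, Finset.mem_image]
  constructor
  · rintro ⟨i, -, hi⟩
    have hsub : ({a, b} : Finset V) ⊆ boundaryFinset G := by
      simp [← hi, Finset.insert_subset_iff, outerRing_mem]
    simpa [Finset.insert_subset_iff] using hsub
  · rintro ⟨ha, hb⟩
    obtain ⟨i, rfl⟩ := exists_outerRing_eq ha
    obtain ⟨j, rfl⟩ := exists_outerRing_eq hb
    rcases (outerRing_adj_iff i j).1 hab with rfl | rfl
    · exact ⟨i, Finset.mem_univ _, rfl⟩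
    · exact ⟨j, Finset.mem_univ _, Finset.pair_comm _ _⟩

lemma card_faces_filter (hab : G.graph.Adj a b) :
    (G.faces.filter fun f => a ∈ f ∧ b ∈ f).card =
      if a ∈ boundaryFinset G ∧ b ∈ boundaryFinset G then 1 else 2 := by
  simp_rw [G.edge_faces a b hab, pair_mem_boundary_edges_iff hab]

lemma exists_eq_triple_of_mem {f : Finset V} (hf : f ∈ G.faces) (ha : a ∈ f) (hb : b ∈ f)
    (hab : a ≠ b) : ∃ c, f = {a, b, c} := by
  have hsub : {a, b} ⊆ f := by simp [Finset.insert_subset_iff, ha, hb]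
  obtain ⟨c, -, hc⟩ := Finset.exists_eq_insert_iff.2
    ⟨hsub, by rw [Finset.card_pair hab, G.faces_card f hf]⟩
  refine ⟨c, ?_⟩
  rw [← hc]
  ext z
  simp only [Finset.mem_insert, Finset.mem_singleton]
  tauto

lemma vdeg_link (haw : G.graph.Adj w a) :
    vdeg (G.link w) a = if w ∈ boundaryFinset G ∧ a ∈ boundaryFinset G then 1 else 2 := by
  rw [← card_faces_filter haw, vdeg, ← Set.ncard_coe_finset]
  refine Set.ncard_congr (fun c _ => {w, a, c}) (fun c hc => ?_) (fun c d hc _ hcd => ?_)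
    (fun f hf => ?_)
  · have hface : G.IsFace w a c := hc
    simpa [IsFace] using hface
  · have hc' : G.IsFace w a c := hc
    have hmem : c ∈ ({w, a, d} : Finset V) := by simp [← hcd]
    have := hc'.nodup
    grind
  · obtain ⟨hf, hw, ha⟩ : f ∈ G.faces ∧ w ∈ f ∧ a ∈ f := by simpa using hf
    obtain ⟨c, rfl⟩ := exists_eq_triple_of_mem hf hw ha haw.ne
    exact ⟨c, hf, rfl⟩

lemma vdeg_link_of_notMem (hw : w ∉ boundaryFinset G) (haw : G.graph.Adj w a) :
    vdeg (G.link w) a = 2 := by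
  rw [vdeg_link haw, if_neg fun h => hw h.1]

lemma IsFace.eq_or_eq (hw : w ∉ boundaryFinset G) (hb : G.IsFace w a b) (hc : G.IsFace w a c)
    (hbc : b ≠ c) {z : V} (hz : G.IsFace w a z) : z = b ∨ z = c :=
  (adj_iff_of_vdeg_eq_two (vdeg_link_of_notMem hw hb.adj) hb hc hbc z).1 hz

lemma exists_isFace_pair (hw : w ∉ boundaryFinset G) (ha : G.graph.Adj w a) :
    ∃ b c, b ≠ c ∧ G.IsFace w a b ∧ G.IsFace w a c := by
  obtain ⟨b, c, hbc, hset⟩ := Set.ncard_eq_two.1 (vdeg_link_of_notMem hw ha)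
  exact ⟨b, c, hbc, ((G.link w).mem_neighborSet a b).1 (by simp [hset]),
    ((G.link w).mem_neighborSet a c).1 (by simp [hset])⟩

lemma existsUnique_isFace (ha : a ∈ boundaryFinset G) (hb : b ∈ boundaryFinset G)
    (hab : G.graph.Adj a b) : ∃! c, G.IsFace a b c := by
  have h := vdeg_link hab
  rw [if_pos ⟨ha, hb⟩, vdeg, Set.ncard_eq_one] at h
  obtain ⟨c, hc⟩ := h
  have hiff : ∀ z, G.IsFace a b z ↔ z = c := fun z => by
    rw [← Set.mem_singleton_iff, ← hc, mem_neighborSet, link]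
  exact ⟨c, (hiff c).2 rfl, fun z => (hiff z).1⟩

lemma IsFace.unique (ha : a ∈ boundaryFinset G) (hb : b ∈ boundaryFinset G)
    (hc : G.IsFace a b c) (hd : G.IsFace a b d) : c = d :=
  (existsUnique_isFace ha hb hc.adj).unique hc hd

lemma vdeg_le_three_of_forall_eq {t : V} (hb : b ∈ boundaryFinset G)
    (h : ∀ z ∉ boundaryFinset G, G.graph.Adj b z → z = t) : vdeg G.graph b ≤ 3 := by
  obtain ⟨i, rfl⟩ := exists_outerRing_eq hb
  refine (vdeg_le_card (s := {G.outerRing (i + 1), G.outerRing (i - 1), t}) fun z hz => ?_).trans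
    Finset.card_le_three
  by_cases hzB : z ∈ boundaryFinset G
  · obtain ⟨j, rfl⟩ := exists_outerRing_eq hzB
    rcases (outerRing_adj_iff i j).1 hz with rfl | rfl <;> simp
  · simp [h z hzB hz]

end AGraph

/-! ### Counting faces and contacts with the outer ring -/

namespace AGraph

variable {V : Type} [Fintype V] [DecidableEq V] {G : AGraph V} {a b w : V}

open Classical in
variable (G) in
/-- The ordered pairs of adjacent vertices. -/
noncomputable def adjPairs : Finset (V × V) :=
  Finset.univ.filter fun p => G.graph.Adj p.1 p.2

lemma mem_adjPairs {p : V × V} : p ∈ G.adjPairs ↔ G.graph.Adj p.1 p.2 := by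
  simp [adjPairs]

lemma card_adjPairs : G.adjPairs.card = ∑ w, vdeg G.graph w := by
  classical
  rw [adjPairs, Finset.card_filter, Fintype.sum_prod_type]
  refine Finset.sum_congr rfl fun w _ => ?_
  rw [← Finset.card_filter, vdeg_eq_degree, ← card_neighborFinset_eq_degree,
    neighborFinset_eq_filter]

lemma card_adjPairs_filter_face {f : Finset V} (hf : f ∈ G.faces) :
    (G.adjPairs.filter fun p => p.1 ∈ f ∧ p.2 ∈ f).card = 6 := by
  have hoff : (G.adjPairs.filter fun p => p.1 ∈ f ∧ p.2 ∈ f) = f.offDiag := by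
    ext p
    simp only [Finset.mem_filter, mem_adjPairs, Finset.mem_offDiag]
    exact ⟨fun h => ⟨h.2.1, h.2.2, h.1.ne⟩,
      fun h => ⟨G.faces_adj f hf _ h.1 _ h.2.1 h.2.2, h.1, h.2.1⟩⟩
  rw [hoff, Finset.offDiag_card, G.faces_card f hf]

lemma card_adjPairs_filter_boundary :
    (G.adjPairs.filter fun p => p.1 ∈ boundaryFinset G ∧ p.2 ∈ boundaryFinset G).card = 8 := by
  have himage : (G.adjPairs.filter fun p => p.1 ∈ boundaryFinset G ∧ p.2 ∈ boundaryFinset G) =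
      (Finset.univ.filter fun p : Fin 4 × Fin 4 => p.2 = p.1 + 1 ∨ p.1 = p.2 + 1).image
        (Prod.map G.outerRing G.outerRing) := by
    ext ⟨a, b⟩
    simp only [Finset.mem_filter, mem_adjPairs, Finset.mem_image, Finset.mem_univ, true_and]
    constructor
    · rintro ⟨hab, ha, hb⟩
      obtain ⟨i, rfl⟩ := exists_outerRing_eq ha
      obtain ⟨j, rfl⟩ := exists_outerRing_eq hb
      exact ⟨(i, j), (outerRing_adj_iff i j).1 hab, rfl⟩
    · rintro ⟨⟨i, j⟩, hij, hab⟩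
      obtain ⟨rfl, rfl⟩ := Prod.mk.inj hab
      exact ⟨(outerRing_adj_iff i j).2 hij, outerRing_mem i, outerRing_mem j⟩
  rw [himage, Finset.card_image_of_injective _ (outerRing_injective.prodMap outerRing_injective)]
  decide

-- Count the triples of an ordered pair of adjacent vertices and a face containing both.
lemma six_mul_card_faces : 6 * G.faces.card + 8 = 2 * ∑ w, vdeg G.graph w := by
  have hpairs : ∑ p ∈ G.adjPairs, (G.faces.filter fun f => p.1 ∈ f ∧ p.2 ∈ f).card =
      6 * G.faces.card := by
    rw [mul_comm, ← smul_eq_mul, ← Finset.sum_const]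
    exact (Finset.sum_card_bipartiteAbove_eq_sum_card_bipartiteBelow
      fun (p : V × V) f => p.1 ∈ f ∧ p.2 ∈ f).trans
      (Finset.sum_congr rfl fun f hf => card_adjPairs_filter_face hf)
  rw [← hpairs, ← card_adjPairs, mul_comm, ← smul_eq_mul, ← Finset.sum_const,
    ← card_adjPairs_filter_boundary (G := G), Finset.card_filter, ← Finset.sum_add_distrib]
  refine Finset.sum_congr rfl fun p hp => ?_
  rw [card_faces_filter (mem_adjPairs.1 hp)]
  split_ifs <;> rfl

lemma sum_vdeg : ∑ w, vdeg G.graph w + 14 = 6 * Fintype.card V := by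
  classical
  have hedges : ∑ w, vdeg G.graph w = 2 * G.graph.edgeSet.ncard := by
    simp_rw [vdeg_eq_degree, sum_degrees_eq_twice_card_edges, Set.ncard_eq_toFinset_card',
      edgeFinset]
  have := six_mul_card_faces (G := G)
  have := G.euler
  omega

open Classical in
variable (G) in
/-- The positions on the outer ring of the neighbours of `w`. -/
noncomputable def contacts (w : V) : Finset (Fin 4) :=
  Finset.univ.filter fun i => G.graph.Adj w (G.outerRing i)

open Classical in
variable (G) in
/-- The positions of the edges of the outer ring that span a face with `w`; the edge at
position `i` joins the ring vertices at positions `i` and `i + 1`. -/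
noncomputable def ears (w : V) : Finset (Fin 4) :=
  Finset.univ.filter fun i => G.IsFace (G.outerRing i) (G.outerRing (i + 1)) w

lemma mem_contacts {i : Fin 4} : i ∈ G.contacts w ↔ G.graph.Adj w (G.outerRing i) := by
  simp [contacts]

lemma mem_ears {i : Fin 4} :
    i ∈ G.ears w ↔ G.IsFace (G.outerRing i) (G.outerRing (i + 1)) w := by
  simp [ears]

lemma ears_subset_contacts : G.ears w ⊆ G.contacts w := fun _ hi =>
  mem_contacts.2 (mem_ears.1 hi).rotate_symm.adj

lemma add_one_mem_contacts {i : Fin 4} (hi : i ∈ G.ears w) : i + 1 ∈ G.contacts w :=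
  mem_contacts.2 (mem_ears.1 hi).adj_right.symm

lemma sum_boundaryFinset (f : V → ℕ) :
    ∑ b ∈ boundaryFinset G, f b = ∑ i, f (G.outerRing i) := by
  rw [← image_outerRing, Finset.sum_image fun _ _ _ _ h => outerRing_injective h]

lemma sum_interiorFinset_add (f : V → ℕ) :
    ∑ w ∈ interiorFinset G, f w + ∑ i, f (G.outerRing i) = ∑ w, f w := by
  rw [← sum_boundaryFinset]
  exact Finset.sum_sdiff (Finset.subset_univ _)

lemma card_contacts_outerRing (i : Fin 4) : (G.contacts (G.outerRing i)).card = 2 := by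
  simp_rw [contacts, outerRing_adj_iff]
  revert i
  decide

lemma sum_card_contacts :
    ∑ w, (G.contacts w).card = ∑ i, vdeg G.graph (G.outerRing i) := by
  classical
  refine (Finset.sum_card_bipartiteAbove_eq_sum_card_bipartiteBelow
    fun w i => G.graph.Adj w (G.outerRing i)).trans (Finset.sum_congr rfl fun i _ => ?_)
  rw [vdeg_eq_degree, ← card_neighborFinset_eq_degree, neighborFinset_eq_filter]
  simp_rw [Finset.bipartiteBelow, adj_comm]

lemma sum_card_contacts_add_vdeg :
    ∑ w ∈ interiorFinset G, ((G.contacts w).card + vdeg G.graph w) =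
      6 * (interiorFinset G).card + 2 := by
  have hcontacts := sum_interiorFinset_add (G := G) fun w => (G.contacts w).card
  have hvdeg := sum_interiorFinset_add (G := G) fun w => vdeg G.graph w
  have hcard : (interiorFinset G).card + 4 = Fintype.card V := by
    simpa using sum_interiorFinset_add (G := G) fun _ => 1
  have htotal := sum_vdeg (G := G)
  simp only [card_contacts_outerRing, sum_card_contacts, Finset.sum_const, Finset.card_univ,
    Fintype.card_fin, smul_eq_mul] at hcontacts
  rw [Finset.sum_add_distrib]
  omega

lemma sum_card_ears : ∑ w ∈ interiorFinset G, (G.ears w).card = 4 := by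
  classical
  refine (Finset.sum_card_bipartiteAbove_eq_sum_card_bipartiteBelow fun w i =>
    G.IsFace (G.outerRing i) (G.outerRing (i + 1)) w).trans ?_
  refine (Finset.sum_congr rfl fun i _ => ?_).trans (Fintype.card_eq_sum_ones (α := Fin 4)).symm
  obtain ⟨w, hw, huniq⟩ := existsUnique_isFace (outerRing_mem i)
    (outerRing_mem (i + 1)) (outerRing_adj_succ (G := G) i)
  refine Finset.card_eq_one.2 ⟨w, Finset.eq_singleton_iff_unique_mem.2 ⟨?_, fun z hz => ?_⟩⟩
  · exact (Finset.mem_bipartiteBelow _).2 ⟨mem_interiorFinset.2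
      (hw.notMem_boundaryFinset (outerRing_mem _) (outerRing_mem _)), hw⟩
  · exact huniq z ((Finset.mem_bipartiteBelow _).1 hz).2

lemma ears_eq_univ_or_card_ears_lt (h : (G.contacts w).Nonempty) :
    G.ears w = Finset.univ ∨ (G.ears w).card < (G.contacts w).card := by
  refine or_iff_not_imp_right.2 fun hlt => ?_
  have heq : G.ears w = G.contacts w :=
    Finset.eq_of_subset_of_card_le ears_subset_contacts (not_lt.1 hlt)
  have hsucc : ∀ i ∈ G.ears w, i + 1 ∈ G.ears w := fun i hi =>
    heq ▸ add_one_mem_contacts hi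
  obtain ⟨i, hi⟩ := heq ▸ h
  rw [Finset.eq_univ_iff_forall]
  have h₁ := hsucc _ hi
  have h₂ := hsucc _ h₁
  have h₃ := hsucc _ h₂
  intro j
  have hj : j = i ∨ j = i + 1 ∨ j = i + 1 + 1 ∨ j = i + 1 + 1 + 1 := by
    clear * -
    revert i j
    decide
  rcases hj with rfl | rfl | rfl | rfl <;> assumption

lemma mem_boundaryFinset_of_ears_eq_univ (hw : w ∉ boundaryFinset G)
    (hears : G.ears w = Finset.univ) {b z : V} (hb : b ∈ boundaryFinset G)
    (hz : G.IsFace w b z) : z ∈ boundaryFinset G := by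
  have hear : ∀ i, G.IsFace (G.outerRing i) (G.outerRing (i + 1)) w := fun i =>
    mem_ears.1 (hears ▸ Finset.mem_univ i)
  obtain ⟨i, rfl⟩ := exists_outerRing_eq hb
  have hprev : G.IsFace w (G.outerRing i) (G.outerRing (i - 1)) := by
    simpa using (hear (i - 1)).reverse
  have hne : G.outerRing (i + 1) ≠ G.outerRing (i - 1) := fun h => by
    have := outerRing_injective h
    grind
  rcases (hear i).rotate_symm.eq_or_eq hw hprev hne hz with rfl | rfl <;> exact outerRing_mem _

-- The link of `w` then has the outer ring as a component, so another component has at least three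
-- vertices.
lemma seven_le_vdeg_of_ears_eq_univ (hw : w ∉ boundaryFinset G) (hdeg : 5 ≤ vdeg G.graph w)
    (hears : G.ears w = Finset.univ) : 7 ≤ vdeg G.graph w := by
  obtain ⟨z, hwz, hz⟩ : ∃ z, G.graph.Adj w z ∧ z ∉ boundaryFinset G := by
    by_contra! hcon
    have := vdeg_le_card hcon
    rw [card_boundaryFinset] at this
    omega
  obtain ⟨s, t, hst, hs, ht⟩ := exists_isFace_pair hw hwz
  have hdisj : Disjoint (boundaryFinset G) {z, s, t} := by
    simp only [Finset.disjoint_right, Finset.mem_insert, Finset.mem_singleton, forall_eq_or_imp,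
      forall_eq]
    exact ⟨hz, fun h => hz (mem_boundaryFinset_of_ears_eq_univ hw hears h hs.swap_right),
      fun h => hz (mem_boundaryFinset_of_ears_eq_univ hw hears h ht.swap_right)⟩
  have hcard : (boundaryFinset G ∪ {z, s, t}).card ≤ vdeg G.graph w := card_le_vdeg fun y hy => by
    simp only [Finset.mem_union, Finset.mem_insert, Finset.mem_singleton] at hy
    rcases hy with hy | rfl | rfl | rfl
    · obtain ⟨i, rfl⟩ := exists_outerRing_eq hy
      exact (mem_ears.1 (hears ▸ Finset.mem_univ i)).rotate_symm.adj
    exacts [hwz, hs.swap_right.adj, ht.swap_right.adj]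
  rwa [Finset.card_union_of_disjoint hdisj, card_boundaryFinset, Finset.card_eq_three.2
    ⟨z, s, t, hs.nodup.2.2, ht.nodup.2.2, hst, rfl⟩] at hcard

end AGraph

/-! ### Tightness of the count -/

namespace AGraph

variable {V : Type} [Fintype V] [DecidableEq V] {G : AGraph V} {w : V}

lemma card_ears_le_card_contacts : (G.ears w).card ≤ (G.contacts w).card :=
  Finset.card_le_card ears_subset_contacts

lemma card_ears_lt_or (hw : w ∉ boundaryFinset G) (hdeg : 5 ≤ vdeg G.graph w) :
    (G.contacts w).card = 0 ∨ (G.ears w).card < (G.contacts w).card ∨ 7 ≤ vdeg G.graph w := by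
  rcases (G.contacts w).eq_empty_or_nonempty with hempty | hne
  · exact .inl (Finset.card_eq_zero.2 hempty)
  · exact .inr ((ears_eq_univ_or_card_ears_lt hne).symm.imp_right
      (seven_le_vdeg_of_ears_eq_univ hw hdeg))

lemma card_ears_add_six_le (hw : w ∉ boundaryFinset G) (hdeg : 5 ≤ vdeg G.graph w) :
    (G.ears w).card + 6 ≤
      (G.contacts w).card + vdeg G.graph w + if (G.contacts w).card = 0 then 1 else 0 := by
  have := card_ears_le_card_contacts (G := G) (w := w)
  have := card_ears_lt_or hw hdeg
  split_ifs <;> omega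

lemma mem_innerRingFinset_iff :
    w ∈ innerRingFinset G ↔ w ∉ boundaryFinset G ∧ (G.contacts w).Nonempty := by
  classical
  rw [innerRingFinset, Finset.mem_filter, mem_interiorFinset, and_congr_right_iff]
  refine fun _ => ⟨fun ⟨b, hb, hwb⟩ => ?_, fun ⟨i, hi⟩ => ?_⟩
  · obtain ⟨i, rfl⟩ := exists_outerRing_eq hb
    exact ⟨i, mem_contacts.2 hwb⟩
  · exact ⟨_, outerRing_mem i, mem_contacts.1 hi⟩

variable (G) in
/-- The local consequences of equality in the counting inequality: every interior vertex has
degree `5`, and one with at least two neighbours on the outer ring spans a face with an edge of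
the ring. -/
structure IsTight : Prop where
  vdeg_eq_five : ∀ w ∉ boundaryFinset G, vdeg G.graph w = 5
  exists_ear : ∀ w ∉ boundaryFinset G, 2 ≤ (G.contacts w).card → (G.ears w).Nonempty

lemma isTight_of_card_enclosed (hfive : ∀ w ∈ interiorFinset G, 5 ≤ vdeg G.graph w)
    (htwo : (interiorFinset G \ innerRingFinset G).card = 2) : G.IsTight := by
  have hle : ∀ w ∈ interiorFinset G, (G.ears w).card + 6 ≤
      (G.contacts w).card + vdeg G.graph w + if (G.contacts w).card = 0 then 1 else 0 :=
    fun w hw => card_ears_add_six_le (mem_interiorFinset.1 hw) (hfive w hw)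
  have henclosed : ((interiorFinset G).filter fun w => (G.contacts w).card = 0) =
      interiorFinset G \ innerRingFinset G := by
    ext w
    simp only [Finset.mem_filter, Finset.mem_sdiff, mem_innerRingFinset_iff, mem_interiorFinset,
      ← Finset.card_pos, Nat.pos_iff_ne_zero]
    tauto
  have hsum : ∑ w ∈ interiorFinset G, ((G.ears w).card + 6) = ∑ w ∈ interiorFinset G,
      ((G.contacts w).card + vdeg G.graph w + if (G.contacts w).card = 0 then 1 else 0) := by
    rw [Finset.sum_add_distrib, Finset.sum_add_distrib, sum_card_ears, sum_card_contacts_add_vdeg,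
      ← Finset.card_filter, henclosed, htwo, Finset.sum_const, smul_eq_mul]
    ring
  have heq := (Finset.sum_eq_sum_iff_of_le hle).1 hsum
  have hcases : ∀ w ∉ boundaryFinset G, vdeg G.graph w = 5 ∧
      (2 ≤ (G.contacts w).card → (G.ears w).Nonempty) := by
    intro w hw
    have hdeg := hfive w (mem_interiorFinset.2 hw)
    have hw_eq := heq w (mem_interiorFinset.2 hw)
    have := card_ears_lt_or hw hdeg
    have := card_ears_le_card_contacts (G := G) (w := w)
    rw [← Finset.card_pos]
    split_ifs at hw_eq <;> omega
  exact ⟨fun w hw => (hcases w hw).1, fun w hw => (hcases w hw).2⟩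

end AGraph

/-! ### Wheels around interior vertices -/

namespace AGraph

variable {V : Type} [Fintype V] [DecidableEq V] {G : AGraph V} {a b c d e p q r t w z : V}

variable (G) in
/-- The neighbours of `w` are the five vertices `a`, `b`, `c`, `d`, `e`, and the faces at `w` are
the five triangles that `w` spans with consecutive ones in this cyclic order. -/
structure IsWheel (w a b c d e : V) : Prop where
  face₁ : G.IsFace w a b
  face₂ : G.IsFace w b c
  face₃ : G.IsFace w c d
  face₄ : G.IsFace w d e
  face₅ : G.IsFace w e a
  nodup : [a, b, c, d, e].Nodup
  adj_iff : ∀ z, G.graph.Adj w z ↔ z = a ∨ z = b ∨ z = c ∨ z = d ∨ z = e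

namespace IsWheel

lemma rotate (h : G.IsWheel w a b c d e) : G.IsWheel w b c d e a :=
  ⟨h.face₂, h.face₃, h.face₄, h.face₅, h.face₁, List.nodup_rotate (n := 1).2 h.nodup,
    fun z => (h.adj_iff z).trans (by tauto)⟩

lemma reverse (h : G.IsWheel w a b c d e) : G.IsWheel w e d c b a :=
  ⟨h.face₄.swap_right, h.face₃.swap_right, h.face₂.swap_right, h.face₁.swap_right,
    h.face₅.swap_right, List.nodup_reverse.2 h.nodup, fun z => (h.adj_iff z).trans (by tauto)⟩

end IsWheel

namespace IsTight

lemma exists_wheel (hG : G.IsTight) (hw : w ∉ boundaryFinset G) (hab : G.IsFace w a b)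
    (hbc : G.IsFace w b c) (hac : a ≠ c) : ∃ d e, G.IsWheel w a b c d e := by
  classical
  have hmem : ∀ z, z ∈ G.graph.neighborFinset w ↔ G.graph.Adj w z := fun z =>
    G.graph.mem_neighborFinset w z
  obtain ⟨d, e, hcd, hde, hea, hnodup, hN⟩ :=
    exists_pentagon_of_vdeg_eq_two (H := G.link w) (N := G.graph.neighborFinset w)
      (by rw [card_neighborFinset_eq_degree, ← vdeg_eq_degree, hG.vdeg_eq_five w hw])
      (fun x y hxy => (hmem x).2 (IsFace.adj hxy))
      (fun x hx => vdeg_link_of_notMem hw ((hmem x).1 hx)) hab hbc hac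
  exact ⟨d, e, hab, hbc, hcd, hde, hea, hnodup, fun z => by rw [← hmem, hN]; simp⟩

lemma exists_wheel_of_three (hG : G.IsTight) (hw : w ∉ boundaryFinset G) (hab : G.IsFace w a b)
    (hbc : G.IsFace w b c) (hcd : G.IsFace w c d) (hac : a ≠ c) (hbd : b ≠ d) :
    ∃ e, G.IsWheel w a b c d e := by
  obtain ⟨d', e, hwheel⟩ := hG.exists_wheel hw hab hbc hac
  have hbd' : b ≠ d' := by
    have := hwheel.nodup
    grind
  obtain rfl : d = d' := (hbc.swap_right.eq_or_eq hw hwheel.face₃ hbd' hcd).resolve_left hbd.symm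
  exact ⟨e, hwheel⟩

lemma exists_isFace_outerRing (hG : G.IsTight) (ht : t ∉ boundaryFinset G)
    (hb : b ∈ boundaryFinset G) (hc : c ∈ boundaryFinset G) (hbc : b ≠ c)
    (htb : G.graph.Adj t b) (htc : G.graph.Adj t c) :
    ∃ d ∈ boundaryFinset G, ∃ e ∈ boundaryFinset G, G.IsFace t d e := by
  obtain ⟨i, rfl⟩ := exists_outerRing_eq hb
  obtain ⟨j, rfl⟩ := exists_outerRing_eq hc
  have htwo : 1 < (G.contacts t).card :=
    Finset.one_lt_card.2 ⟨i, mem_contacts.2 htb, j, mem_contacts.2 htc, fun h => hbc (h ▸ rfl)⟩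
  obtain ⟨k, hk⟩ := hG.exists_ear t ht htwo
  exact ⟨_, outerRing_mem k, _, outerRing_mem (k + 1), (mem_ears.1 hk).rotate_symm⟩

lemma exists_outer_wheel (hG : G.IsTight) (ht : t ∉ boundaryFinset G)
    (hb : b ∈ boundaryFinset G) (hc : c ∉ boundaryFinset G) (hd : d ∉ boundaryFinset G)
    (he : e ∈ boundaryFinset G) (hbc : G.IsFace t b c) (hcd : G.IsFace t c d)
    (hde : G.IsFace t d e) : ∃ w ∈ boundaryFinset G, G.IsWheel t b c d e w := by
  obtain ⟨w, hwheel⟩ := hG.exists_wheel_of_three ht hbc hcd hde (ne_of_mem_of_not_mem hb hd)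
    (ne_of_mem_of_not_mem he hc).symm
  refine ⟨w, ?_, hwheel⟩
  by_contra hw
  have hnodup := hwheel.nodup
  have hbe : b ≠ e := by grind
  obtain ⟨x, hx, y, hy, hxy⟩ := hG.exists_isFace_outerRing ht hb he hbe hbc.adj
    hde.swap_right.adj
  have hbe_face : G.IsFace t b e := by
    have hx' := (hwheel.adj_iff x).1 hxy.adj
    have hy' := (hwheel.adj_iff y).1 hxy.swap_right.adj
    have := hxy.nodup
    have := hxy.swap_right
    grind
  have := hbc.eq_or_eq ht hwheel.face₅.swap_right (by grind) hbe_face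
  grind

end IsTight

/-! ### The two enclosed vertices -/

variable (G) in
/-- `p` and `q` are the only interior vertices without neighbours on the outer ring. -/
structure EnclosedPair (p q : V) : Prop where
  ne : p ≠ q
  notMem_left : p ∉ boundaryFinset G
  notMem_right : q ∉ boundaryFinset G
  notMem_of_adj_left : ∀ z, G.graph.Adj p z → z ∉ boundaryFinset G
  notMem_of_adj_right : ∀ z, G.graph.Adj q z → z ∉ boundaryFinset G
  exists_adj : ∀ w ∉ boundaryFinset G, w ≠ p → w ≠ q → ∃ b ∈ boundaryFinset G, G.graph.Adj w b

namespace EnclosedPair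

lemma symm (h : G.EnclosedPair p q) : G.EnclosedPair q p :=
  ⟨h.ne.symm, h.notMem_right, h.notMem_left, h.notMem_of_adj_right, h.notMem_of_adj_left,
    fun w hw hp hq => h.exists_adj w hw hq hp⟩

lemma mem_of_wheel (h : G.EnclosedPair p q) (hw : w ∉ boundaryFinset G) (hp : w ≠ p)
    (hq : w ≠ q) (hwheel : G.IsWheel w a b c d e) (ha : a ∉ boundaryFinset G)
    (hb : b ∉ boundaryFinset G) (hc : c ∉ boundaryFinset G) (hd : d ∉ boundaryFinset G) :
    e ∈ boundaryFinset G := by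
  obtain ⟨x, hx, hwx⟩ := h.exists_adj w hw hp hq
  rcases (hwheel.adj_iff x).1 hwx with rfl | rfl | rfl | rfl | rfl
  exacts [absurd hx ha, absurd hx hb, absurd hx hc, absurd hx hd, hx]

-- The two neighbours of `p` next to `t` also have boundary neighbours next to `t`, so that two
-- boundary vertices, and hence an edge of the outer ring, lie in the link of `t`.
lemma adj_left_of_wheel (hG : G.IsTight) (h : G.EnclosedPair p q) (hpq : ¬ G.graph.Adj p q)
    {r' r'' t' : V} (hwheel : G.IsWheel r r' p r'' t t') (ht : t ∉ boundaryFinset G) :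
    t ≠ q ∧ ∀ z ∉ boundaryFinset G, G.graph.Adj t z → G.graph.Adj p z := by
  have hne_q : ∀ z, G.graph.Adj p z → z ≠ q := fun z hz hzq => hpq (hzq ▸ hz)
  have hr : G.graph.Adj p r := hwheel.face₁.rotate_symm.adj
  have hr' : G.graph.Adj p r' := hwheel.face₁.reverse.adj
  have hr'' : G.graph.Adj p r'' := hwheel.face₂.adj_right
  have hrB := h.notMem_of_adj_left r hr
  have hr''B := h.notMem_of_adj_left r'' hr''
  have ht' : t' ∈ boundaryFinset G := h.mem_of_wheel hrB hr.ne' (hne_q r hr) hwheel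
    (h.notMem_of_adj_left r' hr') h.notMem_left hr''B ht
  have htp : t ≠ p := by
    have := hwheel.nodup
    grind
  obtain ⟨e, d, hwheel''⟩ :=
    hG.exists_wheel hr''B hwheel.face₃.rotate hwheel.face₂.rotate_symm htp
  have hd : d ∈ boundaryFinset G := h.mem_of_wheel hr''B hr''.ne' (hne_q r'' hr'') hwheel'' ht hrB
    h.notMem_left (h.notMem_of_adj_left e hwheel''.face₃.adj_right)
  obtain ⟨w, hw, hwheel_t⟩ := hG.exists_outer_wheel ht ht' hrB hr''B hd hwheel.face₄.rotate
    hwheel.face₃.rotate_symm hwheel''.face₅.rotate_symm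
  refine ⟨?_, fun z hz htz => ?_⟩
  · rintro rfl
    exact h.notMem_of_adj_right t' hwheel.face₄.adj_right ht'
  rcases (hwheel_t.adj_iff z).1 htz with rfl | rfl | rfl | rfl | rfl
  exacts [absurd ht' hz, hr, hr'', absurd hd hz, absurd hw hz]

lemma adj_left_of_adj (hG : G.IsTight) (h : G.EnclosedPair p q) (hpq : ¬ G.graph.Adj p q)
    (hr : G.graph.Adj p r) (hrt : G.graph.Adj r t) (ht : t ∉ boundaryFinset G) (htp : t ≠ p)
    (hpt : ¬ G.graph.Adj p t) :
    t ≠ q ∧ ∀ z ∉ boundaryFinset G, G.graph.Adj t z → G.graph.Adj p z := by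
  obtain ⟨r', r'', hne, hr', hr''⟩ := exists_isFace_pair h.notMem_left hr
  obtain ⟨t', t'', hwheel⟩ :=
    hG.exists_wheel (h.notMem_of_adj_left r hr) hr'.rotate hr''.swap_left hne
  rcases (hwheel.adj_iff t).1 hrt with rfl | rfl | rfl | rfl | rfl
  · exact absurd hr'.swap_right.adj hpt
  · exact absurd rfl htp
  · exact absurd hr''.swap_right.adj hpt
  · exact adj_left_of_wheel hG h hpq hwheel ht
  · exact adj_left_of_wheel hG h hpq hwheel.reverse.rotate.rotate ht

lemma adj (hG : G.IsTight) (h : G.EnclosedPair p q)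
    (hsep : ¬ RemovalDisconnects G.graph (boundaryFinset G)) : G.graph.Adj p q := by
  by_contra hpq
  let S : Set V := {w | w ≠ q ∧ (w = p ∨ G.graph.Adj p w ∨
    ∀ z ∉ boundaryFinset G, G.graph.Adj w z → G.graph.Adj p z)}
  have hnbr : ∀ w, G.graph.Adj p w → w ∈ S := fun w hw =>
    ⟨fun hwq => hpq (hwq ▸ hw), .inr (.inl hw)⟩
  have hall := mem_of_not_removalDisconnects (P := S) hsep h.notMem_left ⟨h.ne, .inl rfl⟩ <| by
    rintro w ⟨-, rfl | hpw | hw⟩ - z hz hwz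
    · exact hnbr z hwz
    · by_cases hpz : G.graph.Adj p z
      · exact hnbr z hpz
      rcases eq_or_ne z p with rfl | hzp
      · exact ⟨h.ne, .inl rfl⟩
      · exact (adj_left_of_adj hG h hpq hpw hwz hz hzp hpz).imp_right (.inr ∘ .inr)
    · exact hnbr z (hw z hz hwz)
  exact (hall q h.notMem_right).1 rfl

end EnclosedPair

end AGraph

/-! ### The Birkhoff diamond -/

namespace AGraph

variable {V : Type} [Fintype V] [DecidableEq V] {G : AGraph V}
  {p q c₁ c₂ r₁ r₂ s₁ s₂ b₁ b₂ w z : V}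

variable (G) in
/-- The configuration around the two enclosed vertices `p` and `q`, which are adjacent with common
neighbours `c₁` and `c₂`. These four vertices form the Birkhoff diamond; `r₁ r₂ c₂ s₂ s₁ c₁` is the
hexagon around `p` and `q`, and `b₁`, `b₂`, `t`, `t'` lie outside of it. -/
structure Diamond where
  (p q c₁ c₂ r₁ r₂ s₁ s₂ b₁ b₂ t t' : V)
  enclosed : G.EnclosedPair p q
  b₁_mem : b₁ ∈ boundaryFinset G
  b₂_mem : b₂ ∈ boundaryFinset G
  wheel_p : G.IsWheel p c₁ q c₂ r₂ r₁
  wheel_q : G.IsWheel q c₁ p c₂ s₂ s₁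
  wheel_c₁ : G.IsWheel c₁ r₁ p q s₁ b₁
  wheel_c₂ : G.IsWheel c₂ r₂ p q s₂ b₂
  wheel_r₁ : G.IsWheel r₁ b₁ c₁ p r₂ t
  wheel_r₂ : G.IsWheel r₂ b₂ c₂ p r₁ t
  wheel_s₁ : G.IsWheel s₁ b₁ c₁ q s₂ t'
  wheel_s₂ : G.IsWheel s₂ b₂ c₂ q s₁ t'

namespace EnclosedPair

lemma exists_common_face (hG : G.IsTight) (h : G.EnclosedPair p q)
    (hp : G.IsWheel p c₁ q c₂ r₂ r₁) (hc₁ : G.IsWheel c₁ r₁ p q s₁ b₁)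
    (hc₂ : G.IsWheel c₂ r₂ p q s₂ b₂) :
    ∃ t, G.IsWheel r₁ b₁ c₁ p r₂ t ∧ G.IsWheel r₂ b₂ c₂ p r₁ t := by
  have := hp.nodup
  have := hc₁.nodup
  have := hc₂.nodup
  have hr₁ := h.notMem_of_adj_left r₁ hp.face₅.adj
  have hr₂ := h.notMem_of_adj_left r₂ hp.face₄.adj
  obtain ⟨t, hwheel₁⟩ := hG.exists_wheel_of_three hr₁ hc₁.face₅.reverse hc₁.face₁.swap_left
    hp.face₄.rotate_symm (by grind) (by grind)
  obtain ⟨t₂, hwheel₂⟩ := hG.exists_wheel_of_three hr₂ hc₂.face₅.reverse hc₂.face₁.swap_left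
    hp.face₄.swap_left (by grind) (by grind)
  have := hwheel₁.nodup
  have := hwheel₂.nodup
  obtain rfl : t₂ = t := (hwheel₁.face₃.swap_right.eq_or_eq hr₁ hwheel₁.face₄ (by grind)
    hwheel₂.face₄.swap_left).resolve_left (by grind)
  exact ⟨t₂, hwheel₁, hwheel₂⟩

lemma exists_wheel_common (hG : G.IsTight) (h : G.EnclosedPair p q) {c r s : V}
    (hpq : G.IsFace c p q) (hr : G.IsFace c r p) (hs : G.IsFace c q s) (hrq : r ≠ q)
    (hps : p ≠ s) : ∃ b ∈ boundaryFinset G, G.IsWheel c r p q s b := by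
  have hc := h.notMem_of_adj_left c hpq.swap_left.adj
  obtain ⟨b, hwheel⟩ := hG.exists_wheel_of_three hc hr hpq hs hrq hps
  exact ⟨b, h.mem_of_wheel hc hpq.adj.ne hpq.swap_right.adj.ne hwheel
    (h.notMem_of_adj_left r hr.reverse.adj) h.notMem_left h.notMem_right
    (h.notMem_of_adj_right s hs.adj_right), hwheel⟩

lemma nonempty_diamond (hG : G.IsTight) (h : G.EnclosedPair p q)
    (hsep : ¬ RemovalDisconnects G.graph (boundaryFinset G)) : Nonempty G.Diamond := by
  obtain ⟨c₁, c₂, hne, hc₁, hc₂⟩ := exists_isFace_pair h.notMem_left (h.adj hG hsep)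
  obtain ⟨r₂, r₁, hp⟩ := hG.exists_wheel h.notMem_left hc₁.swap_right hc₂ hne
  obtain ⟨s₂, s₁, hq⟩ := hG.exists_wheel h.notMem_right hc₁.rotate hc₂.swap_left hne
  have := hp.nodup
  have := hq.nodup
  obtain ⟨b₁, hb₁, hwheel_c₁⟩ := h.exists_wheel_common hG hc₁.rotate_symm hp.face₅.reverse
    hq.face₅.rotate_symm (by grind) (by grind)
  obtain ⟨b₂, hb₂, hwheel_c₂⟩ := h.exists_wheel_common hG hc₂.rotate_symm
    hp.face₃.rotate hq.face₃.swap_left (by grind) (by grind)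
  obtain ⟨t, hr₁, hr₂⟩ := h.exists_common_face hG hp hwheel_c₁ hwheel_c₂
  obtain ⟨t', hs₁, hs₂⟩ := h.symm.exists_common_face hG hq hwheel_c₁.reverse.rotate
    hwheel_c₂.reverse.rotate
  exact ⟨{ p, q, c₁, c₂, r₁, r₂, s₁, s₂, b₁, b₂, t, t', enclosed := h, b₁_mem := hb₁,
           b₂_mem := hb₂, wheel_p := hp, wheel_q := hq, wheel_c₁ := hwheel_c₁,
           wheel_c₂ := hwheel_c₂, wheel_r₁ := hr₁, wheel_r₂ := hr₂, wheel_s₁ := hs₁,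
           wheel_s₂ := hs₂ }⟩

end EnclosedPair

namespace Diamond

variable (D : G.Diamond)

/-- The mirror image of a diamond, with the roles of `p` and `q` exchanged. -/
def swap : G.Diamond where
  p := D.q
  q := D.p
  c₁ := D.c₁
  c₂ := D.c₂
  r₁ := D.s₁
  r₂ := D.s₂
  s₁ := D.r₁
  s₂ := D.r₂
  b₁ := D.b₁
  b₂ := D.b₂
  t := D.t'
  t' := D.t
  enclosed := D.enclosed.symm
  b₁_mem := D.b₁_mem
  b₂_mem := D.b₂_mem
  wheel_p := D.wheel_q
  wheel_q := D.wheel_p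
  wheel_c₁ := D.wheel_c₁.reverse.rotate
  wheel_c₂ := D.wheel_c₂.reverse.rotate
  wheel_r₁ := D.wheel_s₁
  wheel_r₂ := D.wheel_s₂
  wheel_s₁ := D.wheel_r₁
  wheel_s₂ := D.wheel_r₂

/-- The eight vertices of a diamond inside the outer ring, in the order `p`, `q`, then around the
hexagon. -/
def inner : List V := [D.p, D.q, D.r₁, D.r₂, D.c₂, D.s₂, D.s₁, D.c₁]

lemma notMem_of_mem_inner (hz : z ∈ D.inner) : z ∉ boundaryFinset G := by
  have hp := D.enclosed.notMem_of_adj_left z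
  have hq := D.enclosed.notMem_of_adj_right z
  rw [D.wheel_p.adj_iff] at hp
  rw [D.wheel_q.adj_iff] at hq
  simp only [inner, List.mem_cons, List.not_mem_nil, or_false] at hz
  tauto

lemma q_ne_t : D.q ≠ D.t := fun h =>
  D.enclosed.notMem_of_adj_right D.b₁ (h ▸ D.wheel_r₁.face₅.adj_right) D.b₁_mem

lemma r₁_ne_s₂ : D.r₁ ≠ D.s₂ := by
  intro h
  have hq : G.graph.Adj D.r₁ D.q := h ▸ D.wheel_q.face₄.adj.symm
  have := (D.wheel_r₁.adj_iff D.q).1 hq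
  have := D.wheel_p.nodup
  have := D.enclosed.ne
  have := D.q_ne_t
  have := ne_of_mem_of_not_mem D.b₁_mem D.enclosed.notMem_right
  grind

lemma s₁_ne_r₂ : D.s₁ ≠ D.r₂ := D.swap.r₁_ne_s₂

lemma nodup_inner : D.inner.Nodup := by
  have := D.wheel_p.nodup
  have := D.wheel_q.nodup
  have := D.wheel_c₁.nodup
  have := D.wheel_c₂.nodup
  have := D.enclosed.ne
  have := D.r₁_ne_s₂
  have := D.s₁_ne_r₂
  have := D.wheel_p.face₅.adj.ne
  have := D.wheel_p.face₄.adj.ne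
  have := D.wheel_q.face₅.adj.ne
  have := D.wheel_q.face₄.adj.ne
  simp only [inner, List.nodup_cons, List.mem_cons, List.not_mem_nil, or_false, not_or] at *
  grind

lemma exists_wheel_t (hG : G.IsTight) (ht : D.t ∉ boundaryFinset G) :
    ∃ w ∈ boundaryFinset G, G.IsWheel D.t D.b₁ D.r₁ D.r₂ D.b₂ w :=
  hG.exists_outer_wheel ht D.b₁_mem (D.notMem_of_mem_inner (by simp [inner]))
    (D.notMem_of_mem_inner (by simp [inner])) D.b₂_mem D.wheel_r₁.face₅.rotate
    D.wheel_r₁.face₄.rotate_symm D.wheel_r₂.face₅.swap_left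

lemma mem_inner_or_eq_of_notMem (hG : G.IsTight)
    (hsep : ¬ RemovalDisconnects G.graph (boundaryFinset G)) :
    ∀ z ∉ boundaryFinset G, z ∈ D.inner ∨ z = D.t ∨ z = D.t' := by
  have hb₁ := D.b₁_mem
  have hb₂ := D.b₂_mem
  simp only [inner, List.mem_cons, List.not_mem_nil, or_false]
  refine mem_of_not_removalDisconnects hsep D.enclosed.notMem_left
    (P := {z | (z = _ ∨ _) ∨ _}) (.inl (.inl rfl)) ?_
  rintro a ((rfl | rfl | rfl | rfl | rfl | rfl | rfl | rfl) | rfl | rfl) ha z hz haz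
  · have := (D.wheel_p.adj_iff z).1 haz; grind
  · have := (D.wheel_q.adj_iff z).1 haz; grind
  · have := (D.wheel_r₁.adj_iff z).1 haz; grind
  · have := (D.wheel_r₂.adj_iff z).1 haz; grind
  · have := (D.wheel_c₂.adj_iff z).1 haz; grind
  · have := (D.wheel_s₂.adj_iff z).1 haz; grind
  · have := (D.wheel_s₁.adj_iff z).1 haz; grind
  · have := (D.wheel_c₁.adj_iff z).1 haz; grind
  · obtain ⟨w, hw, hwheel⟩ := D.exists_wheel_t hG ha
    have := (hwheel.adj_iff z).1 haz; grind
  · obtain ⟨w, hw, hwheel⟩ := D.swap.exists_wheel_t hG ha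
    have := (hwheel.adj_iff z).1 haz; simp only [swap] at this; grind

lemma ne_t'_of_wheel_t (hw : w ∈ boundaryFinset G)
    (hwheel : G.IsWheel D.t D.b₁ D.r₁ D.r₂ D.b₂ w) : w ≠ D.t' := by
  rintro rfl
  have ht : D.t = D.s₁ :=
    hwheel.face₅.reverse.unique D.b₁_mem hw D.wheel_s₁.face₅.reverse
  have hq := (hwheel.adj_iff D.q).1 (ht ▸ D.wheel_s₁.face₂.swap_right.adj)
  have := D.wheel_p.nodup
  have := ne_of_mem_of_not_mem D.b₁_mem D.enclosed.notMem_right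
  have := ne_of_mem_of_not_mem D.b₂_mem D.enclosed.notMem_right
  have := ne_of_mem_of_not_mem hw D.enclosed.notMem_right
  grind

lemma eq_t_of_wheel_t (hG : G.IsTight) (hsep : ¬ RemovalDisconnects G.graph (boundaryFinset G))
    (ht : D.t ∉ boundaryFinset G) (hw : w ∈ boundaryFinset G)
    (hwheel : G.IsWheel D.t D.b₁ D.r₁ D.r₂ D.b₂ w) (hz : z ∉ boundaryFinset G)
    (hwz : G.graph.Adj w z) : z = D.t := by
  have hnodup := hwheel.nodup
  have hwt' := D.ne_t'_of_wheel_t hw hwheel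
  have hwt := ne_of_mem_of_not_mem hw ht
  have hinner : ∀ x ∈ D.inner, w ≠ x := fun x hx =>
    ne_of_mem_of_not_mem hw (D.notMem_of_mem_inner hx)
  simp only [inner, List.forall_mem_cons] at hinner
  rcases D.mem_inner_or_eq_of_notMem hG hsep z hz with hzin | rfl | rfl
  · simp only [inner, List.mem_cons, List.not_mem_nil, or_false] at hzin
    rcases hzin with rfl | rfl | rfl | rfl | rfl | rfl | rfl | rfl
    · have := (D.wheel_p.adj_iff w).1 hwz.symm; grind
    · have := (D.wheel_q.adj_iff w).1 hwz.symm; grind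
    · have := (D.wheel_r₁.adj_iff w).1 hwz.symm; grind
    · have := (D.wheel_r₂.adj_iff w).1 hwz.symm; grind
    · have := (D.wheel_c₂.adj_iff w).1 hwz.symm; grind
    · have := (D.wheel_s₂.adj_iff w).1 hwz.symm; grind
    · have := (D.wheel_s₁.adj_iff w).1 hwz.symm; grind
    · have := (D.wheel_c₁.adj_iff w).1 hwz.symm; grind
  · rfl
  · obtain ⟨w', -, hwheel'⟩ := D.swap.exists_wheel_t hG hz
    simp only [swap] at hwheel'
    obtain rfl : w' = w := by
      have := (hwheel'.adj_iff w).1 hwz.symm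
      grind
    exact hwheel'.face₅.reverse.unique D.b₁_mem hw hwheel.face₅.reverse

-- Otherwise the fifth neighbour of `t` is a ring vertex whose only interior neighbour is `t`.
lemma t_mem (hG : G.IsTight) (hsep : ¬ RemovalDisconnects G.graph (boundaryFinset G))
    (hbd : ∀ b ∈ boundaryFinset G, 4 ≤ vdeg G.graph b) : D.t ∈ boundaryFinset G := by
  by_contra ht
  obtain ⟨w, hw, hwheel⟩ := D.exists_wheel_t hG ht
  have := vdeg_le_three_of_forall_eq hw fun z hz => D.eq_t_of_wheel_t hG hsep ht hw hwheel hz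
  have := hbd w hw
  omega

/-- The vertices of a diamond on the outer ring, provided that `t` and `t'` belong to it. -/
def outer : List V := [D.t, D.b₁, D.t', D.b₂]

variable {D}

lemma mem_of_mem_outer (ht : D.t ∈ boundaryFinset G) (ht' : D.t' ∈ boundaryFinset G)
    (hz : z ∈ D.outer) : z ∈ boundaryFinset G := by
  simp only [outer, List.mem_cons, List.not_mem_nil, or_false] at hz
  rcases hz with rfl | rfl | rfl | rfl
  exacts [ht, D.b₁_mem, ht', D.b₂_mem]

lemma nodup_outer (ht : D.t ∈ boundaryFinset G) : D.outer.Nodup := by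
  have := D.wheel_p.nodup
  have := D.wheel_c₁.nodup
  have hface₁ : G.IsFace D.t D.b₁ D.r₁ := D.wheel_r₁.face₅.rotate
  have hface₂ : G.IsFace D.t D.b₂ D.r₂ := D.wheel_r₂.face₅.rotate
  have hface₁' : G.IsFace D.t' D.b₁ D.s₁ := D.wheel_s₁.face₅.rotate
  have hface₂' : G.IsFace D.t' D.b₂ D.s₂ := D.wheel_s₂.face₅.rotate
  have hb : D.b₁ ≠ D.b₂ := fun h => by
    have := hface₁.unique ht D.b₁_mem (h ▸ hface₂)
    grind
  have htt' : D.t ≠ D.t' := fun h => by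
    have := hface₁.unique ht D.b₁_mem (h ▸ hface₁')
    grind
  simp [outer, hb, htt', hface₁.adj.ne, hface₂.adj.ne, hface₁'.adj.ne', hface₂'.adj.ne]

lemma mem_outer_of_mem (ht : D.t ∈ boundaryFinset G) (ht' : D.t' ∈ boundaryFinset G)
    (hz : z ∈ boundaryFinset G) : z ∈ D.outer := by
  have hsub : D.outer.toFinset ⊆ boundaryFinset G := fun x hx =>
    mem_of_mem_outer ht ht' (List.mem_toFinset.1 hx)
  have hcard : (boundaryFinset G).card ≤ D.outer.toFinset.card := by
    rw [card_boundaryFinset, List.toFinset_card_of_nodup (nodup_outer ht)]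
    rfl
  rw [← List.mem_toFinset, Finset.eq_of_subset_of_card_le hsub hcard]
  exact hz

lemma mem_inner_of_notMem (hG : G.IsTight)
    (hsep : ¬ RemovalDisconnects G.graph (boundaryFinset G)) (ht : D.t ∈ boundaryFinset G)
    (ht' : D.t' ∈ boundaryFinset G) (hz : z ∉ boundaryFinset G) : z ∈ D.inner := by
  rcases D.mem_inner_or_eq_of_notMem hG hsep z hz with h | rfl | rfl
  exacts [h, absurd ht hz, absurd ht' hz]

/-! ### The isomorphism with `G*` -/

variable (D) in
/-- The position of the vertices of a diamond in `G*`. -/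
def label : Fin 12 → V :=
  ![D.t, D.t', D.b₁, D.r₁, D.r₂, D.b₂, D.s₁, D.c₁, D.p, D.c₂, D.s₂, D.q]

lemma label_injective (ht : D.t ∈ boundaryFinset G) (ht' : D.t' ∈ boundaryFinset G) :
    Function.Injective D.label := by
  have hnodup : (D.outer ++ D.inner).Nodup := (nodup_outer ht).append D.nodup_inner fun z hz hz' =>
    D.notMem_of_mem_inner hz' (mem_of_mem_outer ht ht' hz)
  refine List.nodup_ofFn.1 (show [D.t, D.t', D.b₁, D.r₁, D.r₂, D.b₂, D.s₁, D.c₁, D.p, D.c₂, D.s₂,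
    D.q].Nodup from hnodup.perm ?_)
  rw [List.perm_iff_count]
  intro z
  simp only [outer, inner, List.cons_append, List.nil_append, List.count_cons, List.count_nil]
  omega

lemma label_surjective (hG : G.IsTight)
    (hsep : ¬ RemovalDisconnects G.graph (boundaryFinset G)) (ht : D.t ∈ boundaryFinset G)
    (ht' : D.t' ∈ boundaryFinset G) : Function.Surjective D.label := by
  intro z
  by_cases hz : z ∈ boundaryFinset G
  · have := mem_outer_of_mem ht ht' hz
    simp only [outer, List.mem_cons, List.not_mem_nil, or_false] at this
    rcases this with rfl | rfl | rfl | rfl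
    exacts [⟨0, rfl⟩, ⟨2, rfl⟩, ⟨1, rfl⟩, ⟨5, rfl⟩]
  · have := mem_inner_of_notMem hG hsep ht ht' hz
    simp only [inner, List.mem_cons, List.not_mem_nil, or_false] at this
    rcases this with rfl | rfl | rfl | rfl | rfl | rfl | rfl | rfl
    exacts [⟨8, rfl⟩, ⟨11, rfl⟩, ⟨3, rfl⟩, ⟨4, rfl⟩, ⟨9, rfl⟩, ⟨10, rfl⟩, ⟨6, rfl⟩, ⟨7, rfl⟩]

end Diamond

lemma IsWheel.adj_apply_iff {ι : Type*} {H : SimpleGraph ι} {f : ι → V}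
    (hf : Function.Injective f) (i j₁ j₂ j₃ j₄ j₅ : ι)
    (h : G.IsWheel (f i) (f j₁) (f j₂) (f j₃) (f j₄) (f j₅))
    (hrow : ∀ j, H.Adj i j ↔ j = j₁ ∨ j = j₂ ∨ j = j₃ ∨ j = j₄ ∨ j = j₅) (j : ι) :
    G.graph.Adj (f i) (f j) ↔ H.Adj i j := by
  simp only [h.adj_iff, hrow, hf.eq_iff]

end AGraph

instance : DecidableRel gstarG.Adj := fun i j =>
  decidable_of_iff (((s(i, j) : Sym2 (Fin 12)) ∈
      ({s(0, 1), s(0, 2), s(0, 3), s(0, 4), s(0, 5), s(1, 2), s(2, 3), s(3, 4), s(4, 5), s(5, 1),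
        s(11, 6), s(11, 7), s(11, 8), s(11, 9), s(11, 10), s(6, 7), s(7, 8), s(8, 9), s(9, 10),
        s(10, 6), s(1, 6), s(1, 10), s(2, 6), s(2, 7), s(3, 7), s(3, 8), s(4, 8), s(4, 9),
        s(5, 9), s(5, 10)} : Finset (Sym2 (Fin 12))) ∧ i ≠ j) ∧ s(i, j) ≠ s(0, 1)) <| by
    simp only [gstarG, icosG, deleteEdges_adj, fromEdgeSet_adj, Set.mem_insert_iff,
      Set.mem_singleton_iff, Finset.mem_insert, Finset.mem_singleton, ne_eq]

namespace AGraph.Diamond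

variable {V : Type} [Fintype V] [DecidableEq V] {G : AGraph V} {D : G.Diamond}

lemma adj_label_iff_of_inner (ht : D.t ∈ boundaryFinset G) (ht' : D.t' ∈ boundaryFinset G)
    {i : Fin 12} (hi : i ∉ ({0, 1, 2, 5} : Finset (Fin 12))) (j : Fin 12) :
    G.graph.Adj (D.label i) (D.label j) ↔ gstarG.Adj i j := by
  have hinj := label_injective ht ht'
  have hcases : ∀ k ∉ ({0, 1, 2, 5} : Finset (Fin 12)), k = 8 ∨ k = 11 ∨ k = 7 ∨ k = 9 ∨ k = 3 ∨
      k = 4 ∨ k = 6 ∨ k = 10 := by decide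
  rcases hcases i hi with rfl | rfl | rfl | rfl | rfl | rfl | rfl | rfl
  · exact IsWheel.adj_apply_iff hinj 8 7 11 9 4 3 D.wheel_p (by decide) j
  · exact IsWheel.adj_apply_iff hinj 11 7 8 9 10 6 D.wheel_q (by decide) j
  · exact IsWheel.adj_apply_iff hinj 7 3 8 11 6 2 D.wheel_c₁ (by decide) j
  · exact IsWheel.adj_apply_iff hinj 9 4 8 11 10 5 D.wheel_c₂ (by decide) j
  · exact IsWheel.adj_apply_iff hinj 3 2 7 8 4 0 D.wheel_r₁ (by decide) j
  · exact IsWheel.adj_apply_iff hinj 4 5 9 8 3 0 D.wheel_r₂ (by decide) j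
  · exact IsWheel.adj_apply_iff hinj 6 2 7 11 10 1 D.wheel_s₁ (by decide) j
  · exact IsWheel.adj_apply_iff hinj 10 5 9 11 6 1 D.wheel_s₂ (by decide) j

lemma adj_label_iff_of_outer (ht : D.t ∈ boundaryFinset G) (ht' : D.t' ∈ boundaryFinset G)
    {i j : Fin 12} (hi : i ∈ ({0, 1, 2, 5} : Finset (Fin 12)))
    (hj : j ∈ ({0, 1, 2, 5} : Finset (Fin 12))) :
    G.graph.Adj (D.label i) (D.label j) ↔ gstarG.Adj i j := by
  have hb₁t : G.graph.Adj D.b₁ D.t := D.wheel_r₁.face₅.reverse.adj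
  have hb₁t' : G.graph.Adj D.b₁ D.t' := D.wheel_s₁.face₅.reverse.adj
  have hb₂t : G.graph.Adj D.b₂ D.t := D.wheel_r₂.face₅.reverse.adj
  have hb₂t' : G.graph.Adj D.b₂ D.t' := D.wheel_s₂.face₅.reverse.adj
  have htt' : ¬ G.graph.Adj D.t D.t' := fun h =>
    notMem_boundaryFinset_of_adj D.b₁_mem ht hb₁t hb₁t' h ht'
  have hbb : ¬ G.graph.Adj D.b₁ D.b₂ := fun h =>
    notMem_boundaryFinset_of_adj D.b₁_mem ht hb₁t h hb₂t.symm D.b₂_mem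
  have hbipartite : ∀ i ∈ ({0, 1, 2, 5} : Finset (Fin 12)), ∀ j ∈ ({0, 1, 2, 5} : Finset (Fin 12)),
      (gstarG.Adj i j ↔ (i ≤ 1 ↔ 2 ≤ j)) := by decide
  rw [hbipartite i hi j hj]
  simp only [Finset.mem_insert, Finset.mem_singleton] at hi hj
  rcases hi with rfl | rfl | rfl | rfl <;> rcases hj with rfl | rfl | rfl | rfl <;>
    simp [label, adj_comm, *]

lemma nonempty_iso_gstarG (D : G.Diamond) (hG : G.IsTight)
    (hsep : ¬ RemovalDisconnects G.graph (boundaryFinset G))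
    (hbd : ∀ b ∈ boundaryFinset G, 4 ≤ vdeg G.graph b) : Nonempty (G.graph ≃g gstarG) := by
  have ht := D.t_mem hG hsep hbd
  have ht' : D.t' ∈ boundaryFinset G := D.swap.t_mem hG hsep hbd
  have hadj : ∀ i j, G.graph.Adj (D.label i) (D.label j) ↔ gstarG.Adj i j := fun i j => by
    by_cases hi : i ∈ ({0, 1, 2, 5} : Finset (Fin 12))
    · by_cases hj : j ∈ ({0, 1, 2, 5} : Finset (Fin 12))
      · exact adj_label_iff_of_outer ht ht' hi hj
      · rw [adj_comm, adj_label_iff_of_inner ht ht' hj, adj_comm]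
    · exact adj_label_iff_of_inner ht ht' hi j
  have iso : gstarG ≃g G.graph :=
    ⟨Equiv.ofBijective D.label ⟨label_injective ht ht', label_surjective hG hsep ht ht'⟩,
      hadj _ _⟩
  exact ⟨iso.symm⟩

end AGraph.Diamond

/-! ### Families and parent triangulations -/

section Main

variable {V : Type} [Fintype V] [DecidableEq V] {G : AGraph V}

lemma InFamilyG.exists_enclosedPair {n : ℕ} (h : InFamilyG G 2 n) :
    ∃ p q, G.EnclosedPair p q := by
  classical
  obtain ⟨p, q, hpq, heq⟩ := Finset.card_eq_two.1 h.2
  have hmem : ∀ w, (w ∉ boundaryFinset G ∧ ∀ b ∈ boundaryFinset G, ¬ G.graph.Adj w b) ↔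
      w = p ∨ w = q := fun w => by
    have hw := Finset.ext_iff.1 heq w
    simp only [Finset.mem_sdiff, innerRingFinset, Finset.mem_filter, AGraph.mem_interiorFinset,
      Finset.mem_insert, Finset.mem_singleton] at hw
    grind
  have hp := (hmem p).2 (.inl rfl)
  have hq := (hmem q).2 (.inr rfl)
  refine ⟨p, q, hpq, hp.1, hq.1, fun z hz hzB => hp.2 z hzB hz, fun z hz hzB => hq.2 z hzB hz,
    fun w hw hwp hwq => ?_⟩
  by_contra! hcon
  exact ((hmem w).1 ⟨hw, hcon⟩).elim hwp hwq

lemma InFamilyG.add_eq_card {m n : ℕ} (h : InFamilyG G m n) : m + n + 4 = Fintype.card V := by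
  classical
  have hsub : innerRingFinset G ⊆ interiorFinset G := Finset.filter_subset _ _
  have hinner : m + n = (interiorFinset G).card := by
    rw [← h.1, ← h.2, Finset.card_sdiff_add_card_eq_card hsub]
  rw [hinner, interiorFinset, ← AGraph.card_boundaryFinset (G := G),
    Finset.card_sdiff_add_card_eq_card (Finset.subset_univ _), Finset.card_univ]

lemma Internally6aConnected.exists_parent (h : Internally6aConnected G) :
    ∃ s ∈ boundaryFinset G, ∃ t ∈ boundaryFinset G,
      (∀ w, 5 ≤ vdeg (G.graph ⊔ fromEdgeSet {s(s, t)}) w) ∧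
        ¬ HasSeparatingCycle (G.graph ⊔ fromEdgeSet {s(s, t)}) 4 := by
  obtain ⟨T, hT | hT, hdeg, -, hcycle, -⟩ := h <;> rw [hT] at hdeg hcycle
  · exact ⟨G.x, by simp [boundaryFinset], G.y, by simp [boundaryFinset], hdeg, hcycle⟩
  · exact ⟨G.u, by simp [boundaryFinset], G.v, by simp [boundaryFinset], hdeg, hcycle⟩

lemma Internally6aConnected.five_le_vdeg (h : Internally6aConnected G) {w : V}
    (hw : w ∈ interiorFinset G) : 5 ≤ vdeg G.graph w := by
  obtain ⟨s, hs, t, ht, hdeg, -⟩ := h.exists_parent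
  have hw := AGraph.mem_interiorFinset.1 hw
  exact (hdeg w).trans_eq (vdeg_sup_edge_of_ne (ne_of_mem_of_not_mem hs hw).symm
    (ne_of_mem_of_not_mem ht hw).symm)

lemma Internally6aConnected.four_le_vdeg (h : Internally6aConnected G) (w : V) :
    4 ≤ vdeg G.graph w := by
  obtain ⟨s, -, t, -, hdeg, -⟩ := h.exists_parent
  have := (hdeg w).trans (vdeg_sup_edge_le s t w)
  omega

lemma AGraph.exists_isCycle_boundaryFinset {H : SimpleGraph V} (hle : G.graph ≤ H) :
    ∃ p : H.Walk G.u G.u, p.IsCycle ∧ p.length = 4 ∧ {w | w ∈ p.support} = boundaryFinset G := by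
  have hux := G.adj_ux.ne
  have hxv := G.adj_xv.ne
  have hvy := G.adj_vy.ne
  have hyu := G.adj_yu.ne
  have huv := G.u_ne_v
  have hxy := G.x_ne_y
  refine ⟨.cons (hle G.adj_ux) (.cons (hle G.adj_xv) (.cons (hle G.adj_vy)
    (.cons (hle G.adj_yu) .nil))), ?_, rfl, ?_⟩
  · rw [Walk.isCycle_def, Walk.isTrail_def]
    refine ⟨?_, by simp, ?_⟩ <;> simp [hux.symm, huv, huv.symm, hxv, hxy, hvy, hyu]
  · ext w
    simp only [Walk.support_cons, Walk.support_nil, List.mem_cons, List.not_mem_nil, or_false,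
      Set.mem_ofPred_eq, boundaryFinset, Finset.coe_insert, Finset.coe_singleton,
      Set.mem_insert_iff, Set.mem_singleton_iff]
    tauto

lemma Internally6aConnected.not_removalDisconnects (h : Internally6aConnected G) :
    ¬ RemovalDisconnects G.graph (boundaryFinset G) := by
  obtain ⟨s, hs, t, ht, -, hcycle⟩ := h.exists_parent
  obtain ⟨p, hp, hlen, hsupp⟩ := AGraph.exists_isCycle_boundaryFinset
    (le_sup_left (a := G.graph) (b := fromEdgeSet {s(s, t)}))
  rintro ⟨a, b, ha, hb, hab⟩
  refine hcycle ⟨G.u, p, hp, hlen, hsupp ▸ ⟨a, b, ha, hb, fun hreach => hab ?_⟩⟩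
  refine hreach.of_forall_adj ha fun c hc d _ hcd => ?_
  simp only [sup_adj, fromEdgeSet_adj, Set.mem_singleton_iff, Sym2.eq_iff] at hcd
  rcases hcd with hcd | ⟨⟨rfl, -⟩ | ⟨rfl, -⟩, -⟩
  exacts [hcd, absurd hs hc, absurd ht hc]

theorem stmt_11_general (G : AGraph V) (n : ℕ) (h2n : InFamilyG G 2 n)
    (hfive : ∀ w ∈ interiorFinset G, 5 ≤ vdeg G.graph w)
    (hbd : ∀ b ∈ boundaryFinset G, 4 ≤ vdeg G.graph b)
    (hsep : ¬ RemovalDisconnects G.graph (boundaryFinset G)) :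
    Nonempty (G.graph ≃g gstarG) ∧ n = 6 ∧ ∀ w ∈ interiorFinset G, vdeg G.graph w = 5 := by
  have hG : G.IsTight := AGraph.isTight_of_card_enclosed hfive h2n.2
  obtain ⟨p, q, hpq⟩ := h2n.exists_enclosedPair
  obtain ⟨D⟩ := hpq.nonempty_diamond hG hsep
  obtain ⟨iso⟩ := D.nonempty_iso_gstarG hG hsep hbd
  have hcard : Fintype.card V = 12 := iso.card_eq
  have := h2n.add_eq_card
  exact ⟨⟨iso⟩, by omega, fun w hw => hG.vdeg_eq_five w (AGraph.mem_interiorFinset.1 hw)⟩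

end Main

/-- If `G` belongs to `G(2,n)` and is internally 6a-connected, then `G`
is isomorphic to `G*` (the icosahedron minus an edge); in particular `n = 6` and every
interior vertex of `G` has degree 5. -/
theorem stmt_11 {V : Type} [Fintype V] [DecidableEq V] (G : AGraph V) (n : ℕ)
    (h2n : InFamilyG G 2 n) (hconn : Internally6aConnected G) :
    Nonempty (G.graph ≃g gstarG) ∧ n = 6 ∧
      ∀ w ∈ interiorFinset G, vdeg G.graph w = 5 :=
  stmt_11_general G n h2n (fun _ hw => hconn.five_le_vdeg hw) (fun b _ => hconn.four_le_vdeg b)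
    hconn.not_removalDisconnects
end
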